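/- arXiv:2507.01138 — 3 statements merged into one kernel-verified Lean document; each statement's English description precedes it below -/
import Mathlib

section
/- Let k, D, m ≥ 2 be integers and let F = {f₁,…,f_m} ⊂ ℤ^k with |f_t|₁ < 3D for all t. Then there exists a subset S ⊆ F such that Span_ℤ(S) = Span_ℤ(F), every s ∈ S has |s|₁ < 3D, and |S| ≤ k(2 + log₂ D). -/
/-
Let `L` be the span of `F`, of rank `r`, with all norms at most `C`. Complete a maximal linearly
independent `b ⊆ F` by standard unit vectors to a rational basis `c`. The determinant with rows `c`
is at most the product of the norms of the rows, hence at most `C ^ r`; and since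
`L ∩ span c = span b`, it bounds the index of `span b` in `L`.

Take `T ⊆ F` generating `L` modulo `span b` irredundantly. Modulo the submodule generated by `b` and
all members of `T` but `t`, everything in `T` except `t` vanishes, so `L` maps onto the product over
`t` of these nontrivial cyclic quotients and the product of their orders is at most `C ^ r`. As
`L / (2 • L)` has order `2 ^ r`, at most `r` of them have order `2`, and the others have order at
least `3`. This gives `3 ^ |T| * 2 ^ r ≤ 3 ^ r * C ^ r`, that is,
`|b| + |T| ≤ r * (2 + log₃ (C / 2))`, while `log₃ (3 * D / 2) ≤ log₂ D` for `D ≥ 2`.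
-/

open Function Module Set Submodule

section Omit

variable {R M ι : Type*} [Ring R] [AddCommGroup M] [Module R M] {H : Submodule R M} {v : ι → M}

/-- The submodule generated by `H` and all members of the family `v` except `v i`. If `v` generates
`M` modulo `H`, it does so irredundantly when none of these submodules is `⊤`. -/
def spanOmit (H : Submodule R M) (v : ι → M) (i : ι) : Submodule R M :=
  H ⊔ span R (v '' {i}ᶜ)

theorem le_spanOmit (i : ι) : H ≤ spanOmit H v i :=
  le_sup_left

theorem mem_spanOmit_of_ne {i j : ι} (hij : i ≠ j) : v i ∈ spanOmit H v j :=
  mem_sup_right (subset_span (mem_image_of_mem v hij))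

theorem spanOmit_sup_span_singleton (i : ι) :
    spanOmit H v i ⊔ span R {v i} = H ⊔ span R (range v) := by
  rw [spanOmit, sup_assoc, ← span_union, ← image_singleton, ← image_union, compl_union_self,
    image_univ]

theorem pi_mkQ_spanOmit_surjective [Finite ι] (hv : H ⊔ span R (range v) = ⊤) :
    Surjective (LinearMap.pi fun i ↦ (spanOmit H v i).mkQ) := by
  classical
  rw [← LinearMap.range_eq_top, eq_top_iff, ← LinearMap.iSup_range_single, iSup_le_iff]
  rintro i _ ⟨y, rfl⟩
  obtain ⟨x, rfl⟩ := mkQ_surjective _ y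
  have hx : x ∈ spanOmit H v i ⊔ span R {v i} := by
    rw [spanOmit_sup_span_singleton, hv]
    exact mem_top
  obtain ⟨w, hw, _, hz, rfl⟩ := mem_sup.1 hx
  obtain ⟨a, rfl⟩ := mem_span_singleton.1 hz
  refine ⟨a • v i, funext fun j ↦ ?_⟩
  rcases eq_or_ne i j with rfl | hij
  · rw [LinearMap.pi_apply, LinearMap.single_apply, Pi.single_eq_same, map_add,
      mkQ_apply _ w, (Quotient.mk_eq_zero _).2 hw, zero_add]
  · rw [LinearMap.pi_apply, LinearMap.single_apply, Pi.single_eq_of_ne hij.symm, mkQ_apply,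
      Quotient.mk_eq_zero]
    exact smul_mem _ a (mem_spanOmit_of_ne hij)

theorem prod_card_quotient_spanOmit_le [Fintype ι] [Finite (M ⧸ H)]
    (hv : H ⊔ span R (range v) = ⊤) :
    ∏ i, Nat.card (M ⧸ spanOmit H v i) ≤ Nat.card (M ⧸ H) := by
  have hker : H ≤ (LinearMap.pi fun i ↦ (spanOmit H v i).mkQ).ker := by
    simpa only [LinearMap.ker_pi, ker_mkQ] using le_iInf le_spanOmit
  rw [← Nat.card_pi]
  exact Nat.card_le_card_of_surjective (H.liftQ _ hker)
    ((pi_mkQ_spanOmit_surjective hv).of_comp (g := H.mkQ))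

theorem exists_subset_sup_span_eq_top_spanOmit_ne_top {F : Finset M}
    (hF : H ⊔ span R (F : Set M) = ⊤) :
    ∃ T ⊆ F, H ⊔ span R (T : Set M) = ⊤ ∧ ∀ t : T, spanOmit H ((↑) : T → M) t ≠ ⊤ := by
  classical
  obtain ⟨T, hTF, hT, hTmin⟩ :=
    exists_minimal_le_of_wellFoundedLT (fun T : Finset M ↦ H ⊔ span R (T : Set M) = ⊤) F hF
  refine ⟨T, hTF, hT, fun t ht ↦ ?_⟩
  have herase : (↑) '' ({t}ᶜ : Set T) = ((T.erase t : Finset M) : Set M) := by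
    rw [image_compl_eq_range_sdiff_image Subtype.val_injective, image_singleton, Subtype.range_coe,
      Finset.coe_erase]
  rw [spanOmit, herase] at ht
  have hsub : T ⊆ T.erase t := hTmin ht (Finset.erase_subset _ _)
  exact Finset.notMem_erase _ _ (hsub t.2)

end Omit

theorem card_le_pow_finrank_of_surjective {G K : Type*} [AddCommGroup G] [Free ℤ G]
    [Module.Finite ℤ G] [AddCommGroup K] {n : ℕ} [NeZero n] (hn : ∀ y : K, n • y = 0)
    {f : G →+ K} (hf : Surjective f) : Nat.card K ≤ n ^ finrank ℤ G := by
  rw [← ModN.natCard_eq G n]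
  let g : ModN G n →+ K := ModN.liftEquiv.symm ⟨f, fun x ↦ hn (f x)⟩
  exact Nat.card_le_card_of_surjective g (Surjective.of_comp (g := ModN.mkQ n) hf)

theorem three_pow_card_mul_two_pow_le {ι : Type*} [Fintype ι] {n : ι → ℕ} (hn : ∀ i, 2 ≤ n i)
    {r : ℕ} (hr : Nat.card {i // n i = 2} ≤ r) :
    3 ^ Fintype.card ι * 2 ^ r ≤ 3 ^ r * ∏ i, n i := by
  set a := Nat.card {i // n i = 2} with ha
  have hprod : 3 ^ Fintype.card ι * 2 ^ a ≤ 3 ^ a * ∏ i, n i := by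
    have hpow (q : ℕ) : q ^ a = ∏ i, if n i = 2 then q else 1 := by
      rw [Finset.prod_ite, Finset.prod_const, Finset.prod_const_one, mul_one, ha,
        Nat.card_eq_fintype_card, Fintype.card_subtype]
    rw [hpow, hpow, ← Finset.card_univ, ← Finset.prod_const, ← Finset.prod_mul_distrib,
      ← Finset.prod_mul_distrib]
    refine Finset.prod_le_prod' fun i _ ↦ ?_
    have := hn i
    split_ifs <;> lia
  calc 3 ^ Fintype.card ι * 2 ^ r
      = 3 ^ Fintype.card ι * 2 ^ a * 2 ^ (r - a) := by
        rw [mul_assoc, ← pow_add, Nat.add_sub_cancel' hr]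
    _ ≤ 3 ^ a * (∏ i, n i) * 3 ^ (r - a) := by gcongr; norm_num
    _ = 3 ^ r * ∏ i, n i := by
        rw [mul_right_comm, ← pow_add, Nat.add_sub_cancel' hr]

section Int

variable {M ι : Type*} [AddCommGroup M] [Free ℤ M] [Module.Finite ℤ M] {H : Submodule ℤ M}
  {v : ι → M}

theorem card_spanOmit_index_eq_le_finrank [Finite ι] (hv : H ⊔ span ℤ (range v) = ⊤) {n : ℕ}
    (hn : 1 < n) : Nat.card {i // Nat.card (M ⧸ spanOmit H v i) = n} ≤ finrank ℤ M := by
  have : NeZero n := ⟨by lia⟩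
  let P (i : ι) : Prop := Nat.card (M ⧸ spanOmit H v i) = n
  let f : M →ₗ[ℤ] ∀ i : {i // P i}, M ⧸ spanOmit H v i := LinearMap.pi fun i ↦ (spanOmit H v i).mkQ
  have hf : Surjective f := (Subtype.surjective_restrict P).comp (pi_mkQ_spanOmit_surjective hv)
  have htors (y : ∀ i : {i // P i}, M ⧸ spanOmit H v i) : n • y = 0 := by
    ext i
    rw [Pi.smul_apply, ← i.2]
    exact card_nsmul_eq_zero'
  rw [← Nat.pow_le_pow_iff_right hn]
  calc n ^ Nat.card {i // P i} = Nat.card (∀ i : {i // P i}, M ⧸ spanOmit H v i) := by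
        have := Fintype.ofFinite {i // P i}
        rw [Nat.card_pi, Finset.prod_congr rfl fun i _ ↦ i.2, Finset.prod_const, Finset.card_univ,
          Nat.card_eq_fintype_card]
    _ ≤ n ^ finrank ℤ M := card_le_pow_finrank_of_surjective htors (f := f.toAddMonoidHom) hf

theorem three_pow_card_mul_two_pow_finrank_le [Fintype ι] [Finite (M ⧸ H)]
    (hv : H ⊔ span ℤ (range v) = ⊤) (hirr : ∀ i, spanOmit H v i ≠ ⊤) :
    3 ^ Fintype.card ι * 2 ^ finrank ℤ M ≤ 3 ^ finrank ℤ M * Nat.card (M ⧸ H) := by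
  have htwo (i : ι) : 2 ≤ Nat.card (M ⧸ spanOmit H v i) := by
    have : Finite (M ⧸ spanOmit H v i) := .of_surjective _ (factor_surjective (le_spanOmit i))
    have : Nontrivial (M ⧸ spanOmit H v i) := Quotient.nontrivial_iff.2 (hirr i)
    exact Finite.one_lt_card
  exact (three_pow_card_mul_two_pow_le htwo (card_spanOmit_index_eq_le_finrank hv one_lt_two)).trans
    (Nat.mul_le_mul_left _ (prod_card_quotient_spanOmit_le hv))

theorem exists_subset_sup_span_eq_top_card_le [Finite (M ⧸ H)] {F : Finset M}
    (hF : H ⊔ span ℤ (F : Set M) = ⊤) :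
    ∃ T ⊆ F, H ⊔ span ℤ (T : Set M) = ⊤ ∧
      3 ^ T.card * 2 ^ finrank ℤ M ≤ 3 ^ finrank ℤ M * Nat.card (M ⧸ H) := by
  obtain ⟨T, hTF, hT, hirr⟩ := exists_subset_sup_span_eq_top_spanOmit_ne_top hF
  refine ⟨T, hTF, hT, ?_⟩
  rw [← Fintype.card_coe T]
  exact three_pow_card_mul_two_pow_finrank_le (by simpa using hT) hirr

end Int

theorem abs_det_le_prod_sum_abs {n R : Type*} [Fintype n] [DecidableEq n] [CommRing R]
    [LinearOrder R] [IsStrictOrderedRing R] (A : Matrix n n R) :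
    |A.det| ≤ ∏ i, ∑ j, |A i j| := by
  have hterm (σ : Equiv.Perm n) :
      |(σ.sign : ℤ) * ∏ i, A i (σ i)| = ∏ i, |A i (σ i)| := by
    rcases Int.units_eq_one_or σ.sign with h | h <;> simp [h, Finset.abs_prod]
  calc |A.det|
      = |∑ σ : Equiv.Perm n, (σ.sign : ℤ) * ∏ i, A i (σ i)| := by
        rw [← A.det_transpose, Matrix.det_apply']; rfl
    _ ≤ ∑ σ : Equiv.Perm n, ∏ i, |A i (σ i)| :=
        (Finset.abs_sum_le_sum_abs _ _).trans_eq (Finset.sum_congr rfl fun σ _ ↦ hterm σ)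
    _ = ∑ f ∈ Finset.univ.map ⟨_, Equiv.coe_fn_injective⟩, ∏ i, |A i (f i)| := by
        rw [Finset.sum_map]; rfl
    _ ≤ ∑ f : n → n, ∏ i, |A i (f i)| :=
        Finset.sum_le_sum_of_subset_of_nonneg (Finset.subset_univ _)
          fun f _ _ ↦ Finset.prod_nonneg fun i _ ↦ abs_nonneg _
    _ = ∏ i, ∑ j, |A i j| := by rw [Finset.prod_univ_sum, Fintype.piFinset_univ]

section Lattice

variable {ι : Type*} [Fintype ι]

theorem card_quotient_span_range [DecidableEq ι] {v : ι → ι → ℤ} (hv : LinearIndependent ℤ v) :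
    Nat.card ((ι → ℤ) ⧸ span ℤ (range v)) = (Matrix.of v).det.natAbs := by
  have hcoe : (↑) ∘ Basis.span hv = v := funext fun i ↦ by
    rw [comp_apply, Basis.span_apply]
  rw [← natAbs_det_basis_change (Pi.basisFun ℤ ι) _ (Basis.span hv), hcoe, Pi.basisFun_det]
  rfl

theorem card_quotient_span_le_prod {c : Finset (ι → ℤ)} (hc : LinearIndepOn ℤ id (c : Set (ι → ℤ)))
    (hcard : c.card = Fintype.card ι) :
    Finite ((ι → ℤ) ⧸ span ℤ (c : Set (ι → ℤ))) ∧
      (Nat.card ((ι → ℤ) ⧸ span ℤ (c : Set (ι → ℤ))) : ℤ) ≤ ∏ x ∈ c, ∑ i, |x i| := by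
  classical
  let e : ι ≃ c := Fintype.equivOfCardEq (by rw [Fintype.card_coe, hcard])
  let v (i : ι) : ι → ℤ := e i
  have hv : LinearIndependent ℤ v := hc.comp e e.injective
  have hrange : range v = c := by
    rw [show v = (↑) ∘ e from rfl, e.surjective.range_comp, Subtype.range_coe_subtype]
    rfl
  rw [← hrange]
  refine ⟨finiteQuotientOfFreeOfRankEq _ ?_, ?_⟩
  · rw [finrank_span_eq_card hv, finrank_fintype_fun_eq_card]
  · rw [card_quotient_span_range hv, Int.natCast_natAbs, ← Finset.prod_coe_sort, ← e.prod_comp]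
    exact abs_det_le_prod_sum_abs (Matrix.of v)

end Lattice

theorem mem_span_of_map_mem_span {R K V W : Type*} [Ring R] [Ring K] [SMul R K]
    [AddCommGroup V] [Module R V] [AddCommGroup W] [Module R W] [Module K W] [IsScalarTower R K W]
    {φ : V →ₗ[R] W} (hφ : Injective φ) {b c : Set V} (hbc : b ⊆ c)
    (hc : LinearIndepOn K φ c) {x : V} (hx : x ∈ span R c) (hφx : φ x ∈ span K (φ '' b)) :
    x ∈ span R b := by
  have hmap {s : Set V} {y : V} (hy : y ∈ span R s) : φ y ∈ span K (φ '' s) :=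
    span_le_restrictScalars R K _ (map_span φ s ▸ mem_map_of_mem hy)
  have hdisj : Disjoint (span K (φ '' b)) (span K (φ '' (c \ b))) := by
    rw [← union_sdiff_cancel hbc, linearIndepOn_union_iff disjoint_sdiff_right] at hc
    exact hc.2.2
  rw [← union_sdiff_cancel hbc, span_union] at hx
  obtain ⟨y, hy, z, hz, rfl⟩ := mem_sup.1 hx
  have hφz : φ z ∈ span K (φ '' b) := by
    simpa using sub_mem hφx (hmap hy)
  have hz0 : z = 0 := hφ (by rw [disjoint_def.1 hdisj _ hφz (hmap hz), map_zero])
  rwa [hz0, add_zero]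

theorem injective_mapQ_submoduleOf {R M : Type*} [Ring R] [AddCommGroup M] [Module R M]
    (H L : Submodule R M) : Injective ((H.submoduleOf L).mapQ H L.subtype le_rfl) := by
  unfold submoduleOf
  rw [← LinearMap.ker_eq_bot, ker_mapQ]
  exact mkQ_map_self _

theorem exists_finset_linearIndepOn_extension {K V W : Type*} [DivisionRing K] [AddCommGroup W]
    [Module K W] [Module.Finite K W] (φ : V → W) (F : Set V) {E : Set V}
    (hE : span K (φ '' E) = ⊤) :
    ∃ b c : Finset V, ↑b ⊆ F ∧ b ⊆ c ∧ (c : Set V) ⊆ b ∪ E ∧ LinearIndepOn K φ (c : Set V) ∧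
      φ '' F ⊆ span K (φ '' b) ∧ c.card = finrank K W := by
  obtain ⟨b, hbF, -, hFb, hb⟩ :=
    exists_linearIndepOn_extension (linearIndepOn_empty K φ) (empty_subset F)
  obtain ⟨c, hcE, hbc, hEc, hc⟩ :=
    exists_linearIndepOn_extension hb (subset_union_left (t := E))
  have hspan : span K (φ '' c) = ⊤ := by
    rw [eq_top_iff, ← hE, span_le]
    exact (image_mono subset_union_right).trans hEc
  have hcfin : c.Finite := LinearIndependent.finite_of_isNoetherian hc
  lift c to Finset V using hcfin
  lift b to Finset V using c.finite_toSet.subset hbc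
  refine ⟨b, c, hbF, Finset.coe_subset.1 hbc, hcE, hc, hFb, ?_⟩
  rw [← Fintype.card_coe, ← finrank_top K W, ← hspan, image_eq_range]
  exact (finrank_span_eq_card hc).symm

section IntLattice

variable {ι : Type*} [Fintype ι]

theorem exists_subset_linearIndepOn_card_quotient_le (F : Finset (ι → ℤ)) :
    ∃ b ⊆ F, LinearIndepOn ℤ id (b : Set (ι → ℤ)) ∧
      Finite (span ℤ (F : Set (ι → ℤ)) ⧸ (span ℤ (b : Set (ι → ℤ))).submoduleOf (span ℤ F)) ∧
      (Nat.card (span ℤ (F : Set (ι → ℤ)) ⧸ (span ℤ (b : Set (ι → ℤ))).submoduleOf (span ℤ F)) : ℤ)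
        ≤ ∏ x ∈ b, ∑ i, |x i| := by
  classical
  let φ : (ι → ℤ) →ₗ[ℤ] (ι → ℚ) := (Algebra.linearMap ℤ ℚ).compLeft ι
  have hφ : Injective φ := Int.cast_injective.comp_left
  let E : Set (ι → ℤ) := range fun i ↦ Pi.single i 1
  have hE : span ℚ (φ '' E) = ⊤ := by
    have hsingle : (φ ∘ fun i ↦ Pi.single i 1) = Pi.basisFun ℚ ι := by
      ext i j
      simp [φ, Pi.single_apply]
    rw [← (Pi.basisFun ℚ ι).span_eq, ← hsingle, range_comp]
  obtain ⟨b, c, hbF, hbc, hcE, hc, hFb, hcard⟩ :=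
    exists_finset_linearIndepOn_extension φ (F : Set (ι → ℤ)) hE
  have hcℤ : LinearIndepOn ℤ id (c : Set (ι → ℤ)) :=
    LinearIndependent.of_comp φ (hc.restrict_scalars' ℤ)
  obtain ⟨_, hle⟩ := card_quotient_span_le_prod hcℤ (hcard.trans (finrank_fintype_fun_eq_card ℚ))
  have hsub : (span ℤ (b : Set (ι → ℤ))).submoduleOf (span ℤ F) =
      (span ℤ (c : Set (ι → ℤ))).submoduleOf (span ℤ F) := by
    refine le_antisymm (comap_mono (span_mono hbc)) fun x hx ↦ ?_
    refine mem_span_of_map_mem_span hφ hbc hc hx ?_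
    have hF : span ℤ (F : Set (ι → ℤ)) ≤ ((span ℚ (φ '' b)).restrictScalars ℤ).comap φ :=
      span_le.2 fun f hf ↦ hFb (mem_image_of_mem φ hf)
    exact hF x.2
  have hinj := injective_mapQ_submoduleOf (span ℤ (c : Set (ι → ℤ))) (span ℤ F)
  have hprod : ∏ x ∈ c, ∑ i, |x i| = ∏ x ∈ b, ∑ i, |x i| := by
    refine (Finset.prod_subset hbc fun x hxc hxb ↦ ?_).symm
    obtain ⟨i, rfl⟩ := (hcE hxc).resolve_left hxb
    simp [Pi.single_apply, apply_ite abs]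
  refine ⟨b, hbF, hcℤ.mono hbc, ?_⟩
  rw [hsub, ← hprod]
  exact ⟨.of_injective _ hinj,
    (Int.ofNat_le.2 (Nat.card_le_card_of_injective _ hinj)).trans hle⟩

end IntLattice

theorem exists_subset_span_union_eq {V : Type*} [AddCommGroup V] [IsAddTorsionFree V]
    [DecidableEq V] {b F : Finset V} (hbF : b ⊆ F)
    [Finite (span ℤ (F : Set V) ⧸ (span ℤ (b : Set V)).submoduleOf (span ℤ F))] :
    ∃ T ⊆ F, span ℤ ((b ∪ T : Finset V) : Set V) = span ℤ F ∧
      3 ^ T.card * 2 ^ finrank ℤ (span ℤ (F : Set V)) ≤ 3 ^ finrank ℤ (span ℤ (F : Set V)) *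
        Nat.card (span ℤ (F : Set V) ⧸ (span ℤ (b : Set V)).submoduleOf (span ℤ F)) := by
  let L := span ℤ (F : Set V)
  have : Module.Finite ℤ L := .span_finset ℤ F
  let F' : Finset L := F.preimage (↑) Subtype.val_injective.injOn
  have hF' : (span ℤ (b : Set V)).submoduleOf L ⊔ span ℤ (F' : Set L) = ⊤ := by
    rw [Finset.coe_preimage, span_span_coe_preimage, sup_top_eq]
  obtain ⟨T, hTF, hT, hcard⟩ := exists_subset_sup_span_eq_top_card_le hF'
  refine ⟨T.map (.subtype _), ?_, ?_, by rwa [Finset.card_map]⟩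
  · intro x hx
    obtain ⟨y, hy, rfl⟩ := Finset.mem_map.1 hx
    exact Finset.mem_preimage.1 (hTF hy)
  · apply_fun map L.subtype at hT
    rw [Submodule.map_sup, map_span, submoduleOf, map_comap_subtype, Submodule.map_top,
      range_subtype, inf_eq_right.2 (span_mono hbF)] at hT
    rw [Finset.coe_union, span_union, Finset.coe_map]
    exact hT

theorem natCast_le_mul_one_add_logb {t r C : ℕ} (hC : 1 ≤ C)
    (h : 3 ^ t * 2 ^ r ≤ 3 ^ r * C ^ r) : (t : ℝ) ≤ r * (1 + Real.logb 3 (C / 2)) := by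
  have : (0 : ℝ) < C := by exact_mod_cast hC
  have hpow : (3 : ℝ) ^ t ≤ (3 * (C / 2)) ^ r := by
    rw [← mul_div_assoc, div_pow, mul_pow, le_div_iff₀ (by positivity)]
    exact_mod_cast h
  calc (t : ℝ) ≤ Real.logb 3 ((3 * (C / 2)) ^ r) := by
        rwa [Real.le_logb_iff_rpow_le (by norm_num) (by positivity), Real.rpow_natCast]
    _ = r * (1 + Real.logb 3 (C / 2)) := by
        rw [Real.logb_pow, Real.logb_mul (by norm_num) (by positivity),
          Real.logb_self_eq_one (by norm_num)]

theorem logb_three_le_logb_two {x : ℝ} (hx : 2 ≤ x) : Real.logb 3 (3 * x / 2) ≤ Real.logb 2 x := by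
  have hlog : 0 ≤ Real.log (x / 2) := Real.log_nonneg (by linarith)
  calc Real.logb 3 (3 * x / 2) = 1 + Real.log (x / 2) / Real.log 3 := by
        rw [mul_div_assoc, Real.logb_mul (by norm_num) (by positivity),
          Real.logb_self_eq_one (by norm_num), Real.logb]
    _ ≤ 1 + Real.log (x / 2) / Real.log 2 := by gcongr; norm_num
    _ = Real.logb 2 x := by
        rw [← Real.logb, Real.logb_div (by positivity) two_ne_zero,
          Real.logb_self_eq_one one_lt_two, add_sub_cancel]

theorem mul_two_add_logb_le {r k : ℕ} {x : ℝ} (hrk : r ≤ k) (hx : 2 ≤ x) :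
    r * (2 + Real.logb 3 (3 * x / 2)) ≤ k * (2 + Real.logb 2 x) := by
  have hlog : 0 ≤ Real.logb 2 x := Real.logb_nonneg one_lt_two (by linarith)
  calc r * (2 + Real.logb 3 (3 * x / 2)) ≤ r * (2 + Real.logb 2 x) := by
        gcongr
        exact logb_three_le_logb_two hx
    _ ≤ k * (2 + Real.logb 2 x) := by gcongr

theorem stmt5_general {ι : Type*} [Fintype ι] {C : ℕ} (hC : 1 ≤ C) (F : Finset (ι → ℤ))
    (hF : ∀ f ∈ F, ∑ i, |f i| ≤ (C : ℤ)) :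
    ∃ S ⊆ F, span ℤ (S : Set (ι → ℤ)) = span ℤ (F : Set (ι → ℤ)) ∧
      (S.card : ℝ) ≤ finrank ℤ (span ℤ (F : Set (ι → ℤ))) * (2 + Real.logb 3 (C / 2)) := by
  classical
  obtain ⟨b, hbF, hb, _, hbC⟩ := exists_subset_linearIndepOn_card_quotient_le F
  obtain ⟨T, hTF, hspan, hT⟩ := exists_subset_span_union_eq hbF
  set r := finrank ℤ (span ℤ (F : Set (ι → ℤ)))
  have hbr : b.card ≤ r := by
    rw [← finrank_span_finset_eq_card hb]
    exact Submodule.finrank_mono (span_mono hbF)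
  have hprod : ∏ x ∈ b, ∑ i, |x i| ≤ (C : ℤ) ^ r :=
    calc ∏ x ∈ b, ∑ i, |x i| ≤ ∏ _ ∈ b, (C : ℤ) :=
          Finset.prod_le_prod (fun x _ ↦ Finset.sum_nonneg fun i _ ↦ abs_nonneg (x i))
            fun x hx ↦ hF x (hbF hx)
      _ = (C : ℤ) ^ b.card := Finset.prod_const _
      _ ≤ (C : ℤ) ^ r := pow_le_pow_right₀ (by exact_mod_cast hC) hbr
  have hpow : 3 ^ T.card * 2 ^ r ≤ 3 ^ r * C ^ r :=
    hT.trans (Nat.mul_le_mul_left _ (by exact_mod_cast hbC.trans hprod))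
  refine ⟨b ∪ T, Finset.union_subset hbF hTF, hspan, ?_⟩
  calc ((b ∪ T).card : ℝ) ≤ b.card + T.card := by exact_mod_cast Finset.card_union_le b T
    _ ≤ r + r * (1 + Real.logb 3 (C / 2)) :=
        add_le_add (Nat.cast_le.2 hbr) (natCast_le_mul_one_add_logb hC hpow)
    _ = r * (2 + Real.logb 3 (C / 2)) := by ring

theorem stmt5 (k D m : ℕ) (hk : 2 ≤ k) (hD : 2 ≤ D) (hm : 2 ≤ m)
    (F : Finset (Fin k → ℤ)) (hcard : F.card = m)
    (hF : ∀ f ∈ F, ∑ i, |f i| < 3 * (D : ℤ)) :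
    ∃ S ⊆ F, Submodule.span ℤ (S : Set (Fin k → ℤ)) = Submodule.span ℤ (F : Set (Fin k → ℤ))
      ∧ (∀ s ∈ S, ∑ i, |s i| < 3 * (D : ℤ))
      ∧ (S.card : ℝ) ≤ k * (2 + Real.logb 2 D) := by
  obtain ⟨S, hSF, hspan, hS⟩ :=
    stmt5_general (C := 3 * D) (by lia) F fun f hf ↦ by exact_mod_cast (hF f hf).le
  have hrank : finrank ℤ (span ℤ (F : Set (Fin k → ℤ))) ≤ k := by
    simpa only [finrank_fin_fun] using finrank_le (span ℤ (F : Set (Fin k → ℤ)))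
  rw [Nat.cast_mul, Nat.cast_ofNat] at hS
  exact ⟨S, hSF, hspan, fun s hs ↦ hF s (hSF hs),
    hS.trans (mul_two_add_logb_le hrank (by exact_mod_cast hD))⟩
end

section
/- Let k, D, m ≥ 2 be integers. The number of distinct subgroups of ℤ^k of the form Span_ℤ(f₁,…,f_m) with each f_t ∈ ℤ^k satisfying |f_t|₁ < 3D is at most k^{C·k·D·log₂ D} for some absolute constant C > 0. -/
/-!
A generating set of a subgroup of `ℤ^k` which is minimal under inclusion is dissociated: if two of
its subsets had the same sum, some generator would be an integer combination of the others. When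
the `n` generators have `ℓ¹` norm at most `R`, the `2 ^ n` distinct subset sums all lie in the ball
of radius `n * R`, and counting lattice points in that ball by the exponential moment method gives
`2 ^ n ≤ (e * (1 + 2 * n * R / k)) ^ k`, hence `n ≤ 12 * k * log₂ R`. So every such subgroup is
generated by that many elements of the ball of radius `R`, which has at most `k ^ (2 * R + 3)`
points.
-/

open Finset Real

section Generators

variable {R M : Type*} [Ring R] [AddCommGroup M] [Module R M]

lemma addDissociated_of_forall_notMem_span {s : Set M}
    (hs : ∀ x ∈ s, x ∉ Submodule.span R (s \ {x})) : AddDissociated s := by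
  classical
  have subset_of_sum_eq : ∀ t u : Finset M, ↑t ⊆ s → ↑u ⊆ s → ∑ x ∈ t, x = ∑ x ∈ u, x →
      t ⊆ u := by
    intro t u ht hu htu x hxt
    by_contra hxu
    have hx : ∑ y ∈ u, y - ∑ y ∈ t.erase x, y = x := by
      rw [← htu, ← add_sum_erase t _ hxt, add_sub_cancel_right]
    refine hs x (ht hxt) (Set.mem_of_eq_of_mem hx.symm ?_)
    refine sub_mem (sum_mem fun y hy ↦ ?_) (sum_mem fun y hy ↦ ?_)
    · exact Submodule.subset_span ⟨hu hy, ne_of_mem_of_not_mem hy hxu⟩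
    · exact Submodule.subset_span ⟨ht (mem_of_mem_erase hy), ne_of_mem_erase hy⟩
  exact fun t ht u hu htu ↦
    (subset_of_sum_eq t u ht hu htu).antisymm (subset_of_sum_eq u t hu ht htu.symm)

variable (R) in
lemma exists_subset_span_eq_addDissociated (s : Finset M) :
    ∃ t ⊆ s, Submodule.span R (t : Set M) = Submodule.span R s ∧ AddDissociated (t : Set M) := by
  classical
  obtain ⟨t, hts, ht⟩ := exists_minimal_le_of_wellFoundedLT
    (fun t : Finset M ↦ Submodule.span R (t : Set M) = Submodule.span R s) s rfl
  refine ⟨t, hts, ht.prop, addDissociated_of_forall_notMem_span (R := R) fun x hx hmem ↦ ?_⟩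
  refine ht.not_prop_of_lt (erase_ssubset (mem_coe.mp hx)) ?_
  rw [← ht.prop, coe_erase, ← Submodule.span_insert_eq_span hmem, Set.insert_sdiff_self_of_mem hx]

lemma exists_span_range_eq_span {t : Finset M} {n : ℕ} (htn : #t ≤ n) :
    ∃ g : Fin n → M, (∀ i, g i ∈ insert 0 (t : Set M)) ∧
      Submodule.span R (Set.range g) = Submodule.span R (t : Set M) := by
  obtain ⟨e⟩ : Nonempty (t ↪ Fin n) := Function.Embedding.nonempty_of_card_le (by simpa using htn)
  have hg : Set.range (Function.extend e ((↑) : t → M) 0) ⊆ insert 0 (t : Set M) := by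
    rw [Set.range_extend e.injective, Subtype.range_coe]
    rintro _ (hx | ⟨i, -, rfl⟩)
    exacts [Or.inr hx, Or.inl rfl]
  refine ⟨_, fun i ↦ hg ⟨i, rfl⟩, le_antisymm ?_ (Submodule.span_mono ?_)⟩
  · exact (Submodule.span_mono hg).trans_eq Submodule.span_insert_zero
  · rw [Set.range_extend e.injective, Subtype.range_coe]
    exact Set.subset_union_left

variable (R) in
lemma exists_card_le_pow_forall_span_mem {V : Finset M} (hV : 0 ∈ V) (n : ℕ) :
    ∃ F : Finset (Submodule R M), #F ≤ #V ^ n ∧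
      ∀ t ⊆ V, #t ≤ n → Submodule.span R (t : Set M) ∈ F := by
  classical
  refine ⟨(Fintype.piFinset fun _ : Fin n ↦ V).image fun g ↦ Submodule.span R (Set.range g),
    card_image_le.trans_eq (by simp), fun t htV htn ↦ ?_⟩
  obtain ⟨g, hg, hspan⟩ := exists_span_range_eq_span (R := R) htn
  refine mem_image.mpr ⟨g, Fintype.mem_piFinset.mpr fun i ↦ ?_, hspan⟩
  exact (hg i).elim (fun h ↦ h ▸ hV) fun h ↦ htV h

end Generators

section Analysis

lemma sum_Icc_pow_natAbs_mul_one_sub {A : Type*} [CommRing A] (x : A) (r : ℕ) :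
    (∑ j ∈ Icc (-(r : ℤ)) r, x ^ j.natAbs) * (1 - x) = 1 + x - 2 * x ^ (r + 1) := by
  induction r with
  | zero =>
    rw [Nat.cast_zero, neg_zero, Icc_self, sum_singleton, Int.natAbs_zero]
    ring
  | succ r ih =>
    have hIcc : Icc (-((r + 1 : ℕ) : ℤ)) (r + 1 : ℕ) =
        insert (-((r + 1 : ℕ) : ℤ)) (insert ((r + 1 : ℕ) : ℤ) (Icc (-(r : ℤ)) r)) := by
      ext j
      simp only [mem_Icc, mem_insert]
      omega
    rw [hIcc, sum_insert (by simp only [mem_Icc, mem_insert]; omega),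
      sum_insert (by simp only [mem_Icc]; omega), Int.natAbs_neg, Int.natAbs_natCast, add_mul,
      add_mul, ih]
    ring

lemma sum_Icc_pow_natAbs_le {x : ℝ} (hx₀ : 0 ≤ x) (hx₁ : x < 1) (r : ℕ) :
    ∑ j ∈ Icc (-(r : ℤ)) r, x ^ j.natAbs ≤ (1 + x) / (1 - x) := by
  rw [le_div_iff₀ (sub_pos.mpr hx₁), sum_Icc_pow_natAbs_mul_one_sub]
  linarith [pow_nonneg hx₀ (r + 1)]

lemma one_add_pow_le_exp_mul {x : ℝ} (hx : -1 ≤ x) (n : ℕ) : (1 + x) ^ n ≤ exp (n * x) := by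
  rw [exp_nat_mul]
  exact pow_le_pow_left₀ (by linarith) (by linarith [add_one_le_exp x]) n

lemma one_add_div_three_le_two_rpow_half {a : ℝ} (ha : 0 ≤ a) : 1 + a / 3 ≤ 2 ^ (a / 2) := by
  rw [rpow_def_of_pos two_pos]
  nlinarith [add_one_le_exp (log 2 * (a / 2)), log_two_gt_d9]

-- One factor `2 ^ (a / 2)` of `2 ^ a` absorbs the linear growth in `a` on the right-hand side.
lemma le_twelve_mul_logb_of_two_rpow_le {a r : ℝ} (ha : 0 ≤ a) (hr : 2 ≤ r)
    (h : 2 ^ a ≤ exp 1 * (1 + 2 * (a * r))) : a ≤ 12 * logb 2 r := by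
  have : 0 < r := by linarith
  set u : ℝ := 2 ^ (a / 2) with hu
  have hu₀ : 0 < u := by positivity
  have hau : 1 + a / 3 ≤ u := one_add_div_three_le_two_rpow_half ha
  have hu_le : u ≤ 18 * r := by
    refine le_of_mul_le_mul_right ?_ hu₀
    calc u * u = 2 ^ a := by rw [hu, ← rpow_add two_pos, add_halves]
      _ ≤ 3 * (1 + 2 * (a * r)) := h.trans (by gcongr; exact exp_one_lt_three.le)
      _ ≤ 18 * r * (1 + a / 3) := by nlinarith
      _ ≤ 18 * r * u := by gcongr
  have hpow : 18 * r ≤ r ^ 6 := by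
    have : (2 : ℝ) ^ 5 ≤ r ^ 5 := by gcongr
    nlinarith
  have hlog : a / 2 ≤ logb 2 (r ^ 6) :=
    (le_logb_iff_rpow_le one_lt_two (by positivity)).mpr (hu_le.trans hpow)
  rw [logb_pow] at hlog
  push_cast at hlog
  linarith

lemma logb_two_three_mul_le {x : ℝ} (hx : 2 ≤ x) : logb 2 (3 * x) ≤ 3 * logb 2 x := by
  have h : 3 * x ≤ x ^ 3 := by nlinarith [mul_self_nonneg (x - 2)]
  calc logb 2 (3 * x) ≤ logb 2 (x ^ 3) := logb_le_logb_of_le one_lt_two (by linarith) h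
    _ = 3 * logb 2 x := by rw [logb_pow]; norm_num

lemma rpow_mul_logb_three_mul_le {b c x : ℝ} (hb : 1 ≤ b) (hc : 0 ≤ c) (hx : 2 ≤ x) :
    b ^ (c * (3 * x) * logb 2 (3 * x)) ≤ b ^ (9 * c * x * logb 2 x) := by
  refine rpow_le_rpow_of_exponent_le hb ?_
  calc c * (3 * x) * logb 2 (3 * x) ≤ c * (3 * x) * (3 * logb 2 x) :=
        mul_le_mul_of_nonneg_left (logb_two_three_mul_le hx) (by positivity)
    _ = 9 * c * x * logb 2 x := by ring

end Analysis

section Ball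

variable {ι : Type*} [Fintype ι] [DecidableEq ι]

variable (ι) in
/-- The closed `ℓ¹` ball of radius `r` around the origin of `ℤ^ι`, as a finite set: it is cut out of
the cube `[-r, r]^ι`. -/
noncomputable def l1Ball (r : ℕ) : Finset (ι → ℤ) :=
  {v ∈ Fintype.piFinset fun _ ↦ Icc (-(r : ℤ)) r | ∑ i, |v i| ≤ r}

lemma mem_l1Ball {r : ℕ} {v : ι → ℤ} : v ∈ l1Ball ι r ↔ ∑ i, |v i| ≤ r := by
  refine ⟨fun h ↦ (mem_filter.mp h).2, fun h ↦ mem_filter.mpr ⟨?_, h⟩⟩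
  refine Fintype.mem_piFinset.mpr fun i ↦ mem_Icc.mpr (abs_le.mp (le_trans ?_ h))
  exact single_le_sum (f := fun i ↦ |v i|) (fun i _ ↦ abs_nonneg _) (mem_univ i)

lemma zero_mem_l1Ball (r : ℕ) : 0 ∈ l1Ball ι r := by
  simp [mem_l1Ball]

lemma sum_mem_l1Ball {t : Finset (ι → ℤ)} {r : ℕ} (ht : t ⊆ l1Ball ι r) :
    ∑ v ∈ t, v ∈ l1Ball ι (#t * r) := by
  rw [mem_l1Ball]
  calc ∑ i, |(∑ v ∈ t, v) i| ≤ ∑ i, ∑ v ∈ t, |v i| := by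
        simp only [Finset.sum_apply]
        gcongr
        exact abs_sum_le_sum_abs _ _
    _ = ∑ v ∈ t, ∑ i, |v i| := sum_comm
    _ ≤ ∑ _v ∈ t, (r : ℤ) := sum_le_sum fun _ hv ↦ mem_l1Ball.mp (ht hv)
    _ = ((#t * r : ℕ) : ℤ) := by simp

lemma l1Ball_mono {r r' : ℕ} (h : r ≤ r') : l1Ball ι r ⊆ l1Ball ι r' :=
  fun _ hv ↦ mem_l1Ball.mpr ((mem_l1Ball.mp hv).trans (mod_cast h))

lemma two_pow_card_le_card_l1Ball {t : Finset (ι → ℤ)} {r : ℕ} (ht : t ⊆ l1Ball ι r)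
    (hdiss : AddDissociated (t : Set (ι → ℤ))) : 2 ^ #t ≤ #(l1Ball ι (#t * r)) := by
  rw [← card_powerset]
  refine card_le_card_of_injOn (fun s ↦ ∑ v ∈ s, v) (fun s hs ↦ ?_)
    (hdiss.mono fun s hs ↦ by simpa using hs)
  have hst : s ⊆ t := mem_powerset.mp hs
  exact l1Ball_mono (Nat.mul_le_mul_right r (card_le_card hst)) (sum_mem_l1Ball (hst.trans ht))

-- Weigh `v` by `x ^ ‖v‖₁`: each point of the ball weighs at least `x ^ r`, and the total weight of
-- the cube factors over the coordinates.
lemma card_l1Ball_mul_pow_le {x : ℝ} (hx₀ : 0 ≤ x) (hx₁ : x < 1) (r : ℕ) :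
    #(l1Ball ι r) * x ^ r ≤ ((1 + x) / (1 - x)) ^ Fintype.card ι := by
  have hweight : ∀ v ∈ l1Ball ι r, x ^ r ≤ ∏ i, x ^ (v i).natAbs := by
    intro v hv
    rw [prod_pow_eq_pow_sum]
    refine pow_le_pow_of_le_one hx₀ hx₁.le ?_
    zify
    exact mem_l1Ball.mp hv
  calc #(l1Ball ι r) * x ^ r = ∑ _v ∈ l1Ball ι r, x ^ r := by rw [sum_const, nsmul_eq_mul]
    _ ≤ ∑ v ∈ l1Ball ι r, ∏ i, x ^ (v i).natAbs := sum_le_sum hweight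
    _ ≤ ∑ v ∈ Fintype.piFinset fun _ : ι ↦ Icc (-(r : ℤ)) r, ∏ i, x ^ (v i).natAbs :=
        sum_le_sum_of_subset_of_nonneg (filter_subset _ _) fun _ _ _ ↦ by positivity
    _ = (∑ j ∈ Icc (-(r : ℤ)) r, x ^ j.natAbs) ^ Fintype.card ι := by
        rw [sum_prod_piFinset _ fun _ (j : ℤ) ↦ x ^ j.natAbs, prod_const, card_univ]
    _ ≤ ((1 + x) / (1 - x)) ^ Fintype.card ι := by
        gcongr
        exact sum_Icc_pow_natAbs_le hx₀ hx₁ r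

lemma card_l1Ball_le {s : ℝ} (hs : 0 < s) (r : ℕ) :
    #(l1Ball ι r) ≤ (1 + 1 / s) ^ r * (1 + 2 * s) ^ Fintype.card ι := by
  have hx₁ : s / (1 + s) < 1 := (div_lt_one (by positivity)).mpr (by linarith)
  have hcard := card_l1Ball_mul_pow_le (ι := ι) (by positivity) hx₁ r
  have hratio : (1 + s / (1 + s)) / (1 - s / (1 + s)) = 1 + 2 * s := by field_simp; ring
  have hinv : (1 + 1 / s) * (s / (1 + s)) = 1 := by field_simp; ring
  calc (#(l1Ball ι r) : ℝ)
      = (1 + 1 / s) ^ r * (#(l1Ball ι r) * (s / (1 + s)) ^ r) := by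
        rw [mul_left_comm, ← mul_pow, hinv, one_pow, mul_one]
    _ ≤ (1 + 1 / s) ^ r * (1 + 2 * s) ^ Fintype.card ι := by
        rw [← hratio]
        gcongr

lemma card_l1Ball_le_exp_mul_pow [Nonempty ι] (r : ℕ) :
    #(l1Ball ι r) ≤ (exp 1 * (1 + 2 * (r / Fintype.card ι))) ^ Fintype.card ι := by
  rcases Nat.eq_zero_or_pos r with rfl | hr
  · have hcard := card_l1Ball_mul_pow_le (ι := ι) le_rfl zero_lt_one 0
    have hexp : (1 : ℝ) ≤ exp 1 ^ Fintype.card ι := one_le_pow₀ (one_le_exp zero_le_one)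
    rw [pow_zero, mul_one, add_zero, sub_zero, div_one, one_pow] at hcard
    simpa only [Nat.cast_zero, zero_div, mul_zero, add_zero, mul_one] using hcard.trans hexp
  have hs : (0 : ℝ) < r / Fintype.card ι := by positivity
  have hexp : (1 + 1 / (r / Fintype.card ι : ℝ)) ^ r ≤ exp 1 ^ Fintype.card ι := by
    refine (one_add_pow_le_exp_mul (by linarith [one_div_pos.mpr hs]) r).trans_eq ?_
    rw [← exp_nat_mul]
    congr 1
    field_simp
  rw [mul_pow]
  exact (card_l1Ball_le hs r).trans (by gcongr)

lemma card_l1Ball_le_card_pow (hι : 2 ≤ Fintype.card ι) (r : ℕ) :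
    #(l1Ball ι r) ≤ Fintype.card ι ^ (2 * r + 3) := by
  have hbound := card_l1Ball_le (ι := ι) (s := 1 / Fintype.card ι) (by positivity) r
  set k := Fintype.card ι
  have hk : (2 : ℝ) ≤ k := mod_cast hι
  have hleft : 1 + 1 / (1 / k : ℝ) ≤ k ^ 2 := by
    rw [one_div_one_div]
    nlinarith
  have hright : (1 + 2 * (1 / k : ℝ)) ^ k ≤ k ^ 3 :=
    calc (1 + 2 * (1 / k : ℝ)) ^ k ≤ exp (k * (2 * (1 / k))) :=
          one_add_pow_le_exp_mul (by linarith [show (0 : ℝ) ≤ 1 / k by positivity]) k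
      _ = exp 1 ^ 2 := by rw [← exp_nat_mul]; congr 1; field_simp; norm_num
      _ ≤ 2 ^ 3 := by nlinarith [exp_one_lt_d9, exp_pos 1]
      _ ≤ (k : ℝ) ^ 3 := by gcongr
  have hprod : (#(l1Ball ι r) : ℝ) ≤ (k : ℝ) ^ (2 * r + 3) := by
    rw [pow_add, pow_mul]
    exact hbound.trans (by gcongr)
  exact_mod_cast hprod

lemma card_le_of_addDissociated_of_subset_l1Ball [Nonempty ι] {t : Finset (ι → ℤ)} {r : ℕ}
    (hr : 2 ≤ r) (ht : t ⊆ l1Ball ι r) (hdiss : AddDissociated (t : Set (ι → ℤ))) :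
    #t ≤ 12 * Fintype.card ι * logb 2 r := by
  have hcount : (2 : ℝ) ^ #t ≤ #(l1Ball ι (#t * r)) :=
    mod_cast two_pow_card_le_card_l1Ball ht hdiss
  have hpow := hcount.trans (card_l1Ball_le_exp_mul_pow _)
  set k := Fintype.card ι
  have hk : 0 < k := Fintype.card_pos
  have hroot : (2 : ℝ) ^ (#t / k : ℝ) ≤ exp 1 * (1 + 2 * (#t / k * r)) := by
    refine le_of_pow_le_pow_left₀ hk.ne' (by positivity) ?_
    rw [← rpow_mul_natCast zero_le_two, div_mul_cancel₀ _ (by positivity), rpow_natCast]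
    refine hpow.trans_eq ?_
    rw [Nat.cast_mul, div_mul_eq_mul_div]
  have hdiv := le_twelve_mul_logb_of_two_rpow_le (by positivity) (mod_cast hr) hroot
  rw [div_le_iff₀ (by positivity)] at hdiv
  linarith

lemma exists_card_le_span_eq_of_subset_l1Ball [Nonempty ι] {s : Set (ι → ℤ)} {r : ℕ}
    (hr : 2 ≤ r) (hs : s ⊆ l1Ball ι r) :
    ∃ t ⊆ l1Ball ι r, #t ≤ 12 * Fintype.card ι * logb 2 r ∧
      Submodule.span ℤ (t : Set (ι → ℤ)) = Submodule.span ℤ s := by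
  lift s to Finset (ι → ℤ) using (finite_toSet _).subset hs
  obtain ⟨t, hts, hspan, hdiss⟩ := exists_subset_span_eq_addDissociated ℤ s
  have ht : t ⊆ l1Ball ι r := hts.trans (mod_cast hs)
  exact ⟨t, ht, card_le_of_addDissociated_of_subset_l1Ball hr ht hdiss, hspan⟩

end Ball

section Spans

variable {ι : Type*} [Fintype ι]

variable (ι) in
/-- The subgroups of `ℤ^ι` generated by vectors of `ℓ¹` norm at most `r`. The number of generators
is unrestricted, and subgroups are encoded as `ℤ`-submodules. -/
def l1Spans (r : ℕ) : Set (Submodule ℤ (ι → ℤ)) :=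
  {L | ∃ s : Set (ι → ℤ), (∀ v ∈ s, ∑ i, |v i| ≤ r) ∧ L = Submodule.span ℤ s}

lemma setOf_span_range_subset_l1Spans (τ : Type*) (r : ℕ) :
    {L : Submodule ℤ (ι → ℤ) | ∃ f : τ → ι → ℤ,
      (∀ t, ∑ i, |f t i| < r) ∧ L = Submodule.span ℤ (Set.range f)} ⊆ l1Spans ι r := by
  rintro _ ⟨f, hf, rfl⟩
  exact ⟨_, Set.forall_mem_range.mpr fun t ↦ (hf t).le, rfl⟩

lemma exists_l1Spans_subset_card_le_pow {r : ℕ} (hι : 2 ≤ Fintype.card ι) (hr : 2 ≤ r) :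
    ∃ F : Finset (Submodule ℤ (ι → ℤ)), l1Spans ι r ⊆ F ∧
      #F ≤ Fintype.card ι ^ ((2 * r + 3) * ⌊12 * Fintype.card ι * logb 2 r⌋₊) := by
  classical
  have : Nonempty ι := Fintype.card_pos_iff.mp (by omega)
  obtain ⟨F, hcard, hF⟩ := exists_card_le_pow_forall_span_mem ℤ (zero_mem_l1Ball (ι := ι) r)
    ⌊12 * Fintype.card ι * logb 2 r⌋₊
  refine ⟨F, ?_, hcard.trans ?_⟩
  · rintro _ ⟨s, hs, rfl⟩
    obtain ⟨t, ht, htcard, hspan⟩ :=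
      exists_card_le_span_eq_of_subset_l1Ball hr fun v hv ↦ mem_l1Ball.mpr (hs v hv)
    exact hspan ▸ hF t ht (Nat.le_floor htcard)
  · rw [pow_mul]
    exact Nat.pow_le_pow_left (card_l1Ball_le_card_pow hι r) _

end Spans

theorem stmt6_general {ι : Type*} [Fintype ι] {r : ℕ} (hι : 2 ≤ Fintype.card ι) (hr : 2 ≤ r) :
    (l1Spans ι r).Finite ∧ ((l1Spans ι r).ncard : ℝ) ≤
      (Fintype.card ι : ℝ) ^ (48 * Fintype.card ι * r * logb 2 r) := by
  obtain ⟨F, hF, hcard⟩ := exists_l1Spans_subset_card_le_pow hι hr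
  have hncard := (Set.ncard_le_ncard hF F.finite_toSet).trans (Set.ncard_coe_finset F ▸ hcard)
  refine ⟨F.finite_toSet.subset hF, (Nat.cast_le.mpr hncard).trans ?_⟩
  have hr' : (2 : ℝ) ≤ r := mod_cast hr
  have hlog : 0 ≤ logb 2 r := logb_nonneg one_lt_two (by linarith)
  rw [Nat.cast_pow, ← rpow_natCast]
  refine rpow_le_rpow_of_exponent_le (mod_cast (by omega)) ?_
  calc (((2 * r + 3) * ⌊12 * Fintype.card ι * logb 2 r⌋₊ : ℕ) : ℝ)
      ≤ (4 * r) * (12 * Fintype.card ι * logb 2 r) := by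
        push_cast
        gcongr
        · linarith
        · exact Nat.floor_le (by positivity)
    _ = 48 * Fintype.card ι * r * logb 2 r := by ring

theorem stmt6 : ∃ C : ℝ, 0 < C ∧ ∀ k D m : ℕ, 2 ≤ k → 2 ≤ D → 2 ≤ m →
    (Set.ncard {L : Submodule ℤ (Fin k → ℤ) | ∃ f : Fin m → (Fin k → ℤ),
        (∀ t, ∑ i, |f t i| < 3 * (D : ℤ)) ∧ L = Submodule.span ℤ (Set.range f)} : ℝ)
      ≤ (k : ℝ) ^ (C * k * D * Real.logb 2 D) := by
  refine ⟨9 * 48, by norm_num, fun k D m hk hD _ ↦ ?_⟩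
  obtain ⟨hfin, hcard⟩ := stmt6_general (ι := Fin k) (r := 3 * D) (by simpa) (by omega)
  have hncard := Set.ncard_le_ncard (setOf_span_range_subset_l1Spans (Fin m) (3 * D)) hfin
  have hrpow := rpow_mul_logb_three_mul_le (b := k) (c := 48 * k) (x := D)
    (mod_cast (by omega)) (by positivity) (mod_cast hD)
  push_cast [Fintype.card_fin, ← mul_assoc] at hncard hcard hrpow ⊢
  exact (Nat.cast_le.mpr hncard).trans (hcard.trans hrpow)
end

section
/- Let G be a graph on n vertices with maximum degree at most d, let d' ≥ 1, and define an auxiliary graph on V(G) where u ∼ u' iff some one of d given maps g_i : V(G) → path P_n sends them to vertices at distance less than ℓ in P_n, where each g_i has all fibers of size at most 4. Then this auxiliary graph has maximum degree less than 8dℓ, and consequently (by Hajnal–Szemerédi) V(G) can be partitioned into 8dℓ independent sets of sizes differing by at most 1, each of which satisfies: for all u ≠ u' in the set and all i, the distance between g_i(u) and g_i(u') in P_n is at least ℓ. -/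
/-!
If every `g i` has fibres of size at most `k`, then a vertex has fewer than `k (2ℓ - 1)` others at
distance less than `ℓ` under `g i`, so the auxiliary graph has degree less than `2 k d ℓ`, and the
Hajnal–Szemerédi theorem applies.

That theorem is proved by the argument of Kierstead and Kostochka. By induction on the edges there
is a proper colouring whose classes all have `s` elements, up to one class `a` with `s - 1` and one
class `b` with `s + 1`. Say that a colour is accessible if vertices can be moved one after the other
along a chain of classes from it to `a`; if `b` is accessible, such a chain repairs the colouring.
Otherwise choose a set `T` of accessible colours all of whose chains pass through one common colour,
while each colour of `T` can be removed without cutting off another one. Counting edges between the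
classes of `T` and the inaccessible ones gives a vertex `w` with colour in `T` and an inaccessible
vertex `z` to which `w` is the only neighbour of its colour, such that either `w` can move to
another accessible class, or `w` is related in the same way to an inaccessible `z'` not adjacent to
`z`. Let `z` take the colour of `w` and recolour the remaining inaccessible vertices by induction on
the number of vertices. In the first case, moving `w` leads to an equitable colouring; in the
second, `w` moves to an inaccessible class and the colour of `z'` becomes accessible in addition, so
this happens only finitely often. Adding a disjoint clique makes the number of vertices divisible by
the number of colours.
-/

namespace HajnalSzemeredi

open Finset Function Relation SimpleGraph
open scoped Classical

section Reachability

variable {C : Type*} {r r' : C → C → Prop} {S : Set C} {a c u w : C}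

/-- `c` reaches `a` along steps of `r` none of which ends in `S`; the starting point `c` itself
may lie in `S`. -/
def ReachesAvoiding (r : C → C → Prop) (S : Set C) (c a : C) : Prop :=
  ReflTransGen (fun x y ↦ r x y ∧ y ∉ S) c a

theorem ReachesAvoiding.reflTransGen (h : ReachesAvoiding r S c a) : ReflTransGen r c a :=
  ReflTransGen.mono (fun _ _ hxy ↦ hxy.1) _ _ h

theorem ReachesAvoiding.insert_self (h : ReachesAvoiding r S c a) :
    ReachesAvoiding r (insert c S) c a := by
  suffices ∀ x, ReachesAvoiding r S x a →
      ReachesAvoiding r (insert c S) x a ∨ ReachesAvoiding r (insert c S) c a from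
    (this c h).elim id id
  intro x hx
  induction hx using ReflTransGen.head_induction_on with
  | refl => exact .inl .refl
  | @head x y hxy _ ih =>
    by_cases hyc : y = c
    · subst hyc
      exact .inr (ih.elim id id)
    · exact ih.imp_left (.head ⟨hxy.1, by simp [hyc, hxy.2]⟩)

theorem ReachesAvoiding.transfer (h : ReachesAvoiding r S c a) (hc : c ∉ S)
    (hstep : ∀ x y, x ∉ S → y ∉ S → y ≠ c → ReflTransGen r y a → r x y → r' x y) :
    ReflTransGen r' c a := by
  suffices ∀ x, ReachesAvoiding r (insert c S) x a → x ∉ S → ReflTransGen r' x a from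
    this c h.insert_self hc
  intro x hx
  induction hx using ReflTransGen.head_induction_on with
  | refl => exact fun _ ↦ .refl
  | @head x y hxy hya ih =>
    obtain ⟨hyc, hyS⟩ : y ≠ c ∧ y ∉ S := by simpa using hxy.2
    exact fun hxS ↦ .head (hstep x y hxS hyS hyc (ReachesAvoiding.reflTransGen hya) hxy.1) (ih hyS)

theorem exists_step_reachesAvoiding (h : ReflTransGen r c a) (hca : c ≠ a) :
    ∃ d, d ≠ c ∧ r c d ∧ ReachesAvoiding r {c} d a := by
  have h' : ReachesAvoiding r ∅ c a :=
    ReflTransGen.mono (fun _ _ hxy ↦ ⟨hxy, Set.notMem_empty _⟩) _ _ h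
  have h'' := h'.insert_self
  rw [insert_empty_eq] at h''
  rcases h''.cases_head with h | ⟨d, ⟨hcd, hd⟩, hda⟩
  · exact absurd h hca
  · exact ⟨d, hd, hcd, hda⟩

variable [Fintype C]

/-- The points from which `a` can be reached. -/
noncomputable def accessible (r : C → C → Prop) (a : C) : Finset C :=
  {c | ReflTransGen r c a}

theorem mem_accessible : c ∈ accessible r a ↔ ReflTransGen r c a := by
  simp [accessible]

theorem self_mem_accessible : a ∈ accessible r a :=
  mem_accessible.2 .refl

/-- The points other than `u` all of whose paths to `a` run through `u`. -/
noncomputable def trapped (r : C → C → Prop) (a u : C) : Finset C :=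
  {c ∈ accessible r a | c ≠ u ∧ ¬ ReachesAvoiding r {u} c a}

theorem mem_trapped :
    c ∈ trapped r a u ↔ c ∈ accessible r a ∧ c ≠ u ∧ ¬ ReachesAvoiding r {u} c a := by
  simp [trapped]

theorem target_notMem_trapped : a ∉ trapped r a u :=
  fun h ↦ (mem_trapped.1 h).2.2 .refl

theorem ReachesAvoiding.of_trapped (h : ReachesAvoiding r {u} c a) (hw : w ∈ trapped r a u) :
    ReachesAvoiding r {w} c a := by
  induction h using ReflTransGen.head_induction_on with
  | refl => exact .refl
  | head hxy hya ih =>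
    refine .head ⟨hxy.1, ?_⟩ ih
    rintro rfl
    exact (mem_trapped.1 hw).2.2 hya

theorem trapped_ssubset (hw : w ∈ trapped r a u) : trapped r a w ⊂ trapped r a u := by
  refine (Finset.ssubset_iff_of_subset fun c hc ↦ ?_).2 ⟨w, hw, fun h ↦ (mem_trapped.1 h).2.1 rfl⟩
  obtain ⟨hcA, -, hcw⟩ := mem_trapped.1 hc
  refine mem_trapped.2 ⟨hcA, ?_, fun h ↦ hcw (h.of_trapped hw)⟩
  rintro rfl
  obtain ⟨d, -, hcd, hda⟩ := exists_step_reachesAvoiding (mem_accessible.1 hcA)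
    (ne_of_mem_of_not_mem hc target_notMem_trapped)
  refine hcw (.head ⟨hcd, ?_⟩ (hda.of_trapped hw))
  rintro rfl
  exact (mem_trapped.1 hw).2.2 hda

theorem exists_minimal_trapped (h : ∃ c ∈ accessible r a, c ≠ a) :
    ∃ u ∈ accessible r a, (trapped r a u).Nonempty ∧ ∀ w ∈ trapped r a u, trapped r a w = ∅ := by
  obtain ⟨c, hcA, hca⟩ := h
  have ha : c ∈ trapped r a a := by
    refine mem_trapped.2 ⟨hcA, hca, fun h ↦ ?_⟩
    rcases ReflTransGen.cases_tail h with h | ⟨_, _, h⟩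
    · exact hca h.symm
    · exact h.2 rfl
  obtain ⟨u, hu, hmin⟩ := exists_min_image {u ∈ accessible r a | (trapped r a u).Nonempty}
    (fun u ↦ #(trapped r a u)) ⟨a, by simpa using ⟨self_mem_accessible, c, ha⟩⟩
  rw [mem_filter] at hu
  refine ⟨u, hu.1, hu.2, fun w hw ↦ not_nonempty_iff_eq_empty.1 fun hne ↦ ?_⟩
  exact (card_lt_card (trapped_ssubset hw)).not_ge
    (hmin w (mem_filter.2 ⟨(mem_trapped.1 hw).1, hne⟩))

theorem reachesAvoiding_of_trapped_eq_empty (hw : trapped r a w = ∅) (hc : c ∈ accessible r a)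
    (hcw : c ≠ w) : ReachesAvoiding r {w} c a := by
  by_contra h
  exact notMem_empty c (hw ▸ mem_trapped.2 ⟨hc, hcw, h⟩)

theorem not_step_of_mem_trapped (hw : w ∈ trapped r a u) (hc : c ∈ accessible r a)
    (hcT : c ∉ trapped r a u) (hcu : c ≠ u) : ¬ r w c := fun hwc ↦
  (mem_trapped.1 hw).2.2 <| .head ⟨hwc, hcu⟩ <| by
    by_contra h
    exact hcT (mem_trapped.2 ⟨hc, hcu, h⟩)

end Reachability

section Recolouring

variable {V C : Type*} {G : SimpleGraph V} {f : V → C} {a b c : C} {s : ℕ} {y : V}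

/-- The vertex `y` has a neighbour of colour `c`. -/
def Sees (G : SimpleGraph V) (f : V → C) (y : V) (c : C) : Prop :=
  ∃ x, G.Adj y x ∧ f x = c

/-- The relation on colours whose reachability drives the proof: some vertex of colour `c` has no
neighbour of colour `c'`, so it can be moved from the class of `c` to that of `c'`. -/
def Movable (G : SimpleGraph V) (f : V → C) (c c' : C) : Prop :=
  ∃ y, f y = c ∧ ¬ Sees G f y c'

theorem sees_of_notMem_accessible [Fintype C] (hy : f y ∉ accessible (Movable G f) a)
    (hc : c ∈ accessible (Movable G f) a) : Sees G f y c := by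
  by_contra h
  exact hy (mem_accessible.2 (.head ⟨y, rfl, h⟩ (mem_accessible.1 hc)))

/-- The colouring obtained from `f`, which need only be proper away from `y`, by giving `y` the
colour `b`. -/
noncomputable def recolor (f : V → C) (y : V) (b : C)
    (hf : ∀ u v, G.Adj u v → u ≠ y → v ≠ y → f u ≠ f v) (hb : ¬ Sees G f y b) : G.Coloring C :=
  Coloring.mk (update f y b) fun {u v} huv ↦ by
    have hb : ∀ x, G.Adj y x → f x ≠ b := fun x hx h ↦ hb ⟨x, hx, h⟩
    have := huv.symm
    grind [huv.ne, update_apply]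

theorem Movable.update {d d' : C} (h : Movable G f d d') (hd : d ≠ f y) (hd' : d' ≠ b) :
    Movable G (update f y b) d d' := by
  obtain ⟨v, rfl, hv⟩ := h
  refine ⟨v, update_of_ne (by rintro rfl; exact hd rfl) _ _, ?_⟩
  rintro ⟨x, hvx, hx⟩
  rw [update_apply] at hx
  split_ifs at hx
  · exact hd' hx.symm
  · exact hv ⟨x, hvx, hx⟩

variable [Fintype V]

theorem card_filter_update_eq (f : V → C) (y : V) (b c : C) :
    #{v | update f y b v = c} = #{v ∈ univ.erase y | f v = c} + if c = b then 1 else 0 := by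
  have herase : #{v ∈ univ.erase y | update f y b v = c} = #{v ∈ univ.erase y | f v = c} := by
    congr 1
    exact filter_congr fun v hv ↦ by rw [update_of_ne (ne_of_mem_erase hv)]
  rw [← herase, filter_erase]
  split_ifs with hcb
  · rw [card_erase_add_one (by simp [hcb])]
  · rw [erase_eq_of_notMem (by simpa using Ne.symm hcb), add_zero]

/-- Every colour class has `s` elements, except that the class of `a` has one too few and that of
`b` one too many; for `a = b` all classes have `s` elements. -/
def NearlyEquitable (f : V → C) (s : ℕ) (a b : C) : Prop :=
  ∀ c, #{v | f v = c} + (if c = a then 1 else 0) = s + if c = b then 1 else 0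

/-- `G` has a proper colouring by `C` all of whose classes have `s` elements. -/
def HasEquitableColoring (G : SimpleGraph V) (C : Type*) (s : ℕ) : Prop :=
  ∃ f : G.Coloring C, ∀ c, #{v | f v = c} = s

theorem NearlyEquitable.hasEquitableColoring {f : G.Coloring C} (hf : NearlyEquitable f s a a) :
    HasEquitableColoring G C s :=
  ⟨f, fun c ↦ Nat.add_right_cancel (hf c)⟩

theorem NearlyEquitable.update (hf : NearlyEquitable f s a (f y)) :
    NearlyEquitable (update f y b) s a b := by
  intro c
  have hfc := hf c
  have h := card_filter_update_eq f y b c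
  have h' := card_filter_update_eq f y (f y) c
  rw [update_eq_self] at h'
  omega

theorem NearlyEquitable.card_class_eq (hf : NearlyEquitable f s a b) (hca : c ≠ a) (hcb : c ≠ b) :
    #{v | f v = c} = s := by
  simpa [hca, hcb] using hf c

/- Along a path of movable colours from `b` to `a` visiting no colour twice, one vertex per step can
be moved: moving a vertex out of the first class into the second leaves the later steps intact. -/
theorem NearlyEquitable.hasEquitableColoring_of_reachesAvoiding [Finite C] (S : Set C)
    {f : G.Coloring C} {b : C} (hf : NearlyEquitable f s a b) (hb : b ∉ S)
    (h : ReachesAvoiding (Movable G f) S b a) : HasEquitableColoring G C s := by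
  induction S using WellFoundedGT.induction generalizing f b with
  | _ S ih =>
    rcases h.insert_self.cases_head with rfl | ⟨d, ⟨⟨y, rfl, hy⟩, hd⟩, hda⟩
    · exact hf.hasEquitableColoring
    · let f' : G.Coloring C := recolor f y d (fun _ _ huv _ _ ↦ f.valid huv) hy
      refine ih _ (Set.ssubset_insert hb) (f := f') hf.update hd ?_
      refine ReachesAvoiding.transfer hda hd fun x x' hx hx' hx'd _ hxx' ↦ ⟨?_, hx'⟩
      exact hxx'.update (fun h ↦ hx (h ▸ Set.mem_insert _ _)) hx'd

end Recolouring

section Counting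

theorem sum_sum_one_div_card_le {α β : Type*} (r : α → β → Prop) (s : Finset α) (t : Finset β) :
    ∑ a ∈ s, ∑ b ∈ t with r a b, (1 / #{a ∈ s | r a b} : ℚ) ≤ #t := by
  rw [sum_comm' (t' := t) (s' := fun b ↦ {a ∈ s | r a b}) (by simp; tauto), ← nsmul_one #t]
  refine sum_le_card_nsmul _ _ _ fun b _ ↦ ?_
  rw [sum_const, nsmul_eq_mul, mul_one_div]
  exact div_self_le_one _

variable {V C : Type*} [Fintype V] {G : SimpleGraph V} {f : V → C} {A T : Finset C} {c : C}
  {q s t : ℕ} {w y z : V}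

/-- The number of neighbours of `y` whose colour is not in `A`. -/
noncomputable def degreeOutside (G : SimpleGraph V) (f : V → C) (A : Finset C) (y : V) : ℕ :=
  #{x | G.Adj y x ∧ f x ∉ A}

/-- The vertex `w` is a solo neighbour of `z`: the only neighbour of `z` of its colour. -/
def IsSolo (G : SimpleGraph V) (f : V → C) (w z : V) : Prop :=
  G.Adj z w ∧ ∀ x, G.Adj z x → f x = f w → x = w

theorem degreeOutside_add_sum_card (G : SimpleGraph V) (f : V → C) (A : Finset C) (y : V) :
    degreeOutside G f A y + ∑ c ∈ A, #{x | G.Adj y x ∧ f x = c} = G.degree y := by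
  have hsum : #{x | G.Adj y x ∧ f x ∈ A} = ∑ c ∈ A, #{x | G.Adj y x ∧ f x = c} := by
    rw [card_eq_sum_card_fiberwise (f := f) (t := A) fun x hx ↦ (mem_filter.1 hx).2.2]
    refine sum_congr rfl fun c hc ↦ ?_
    rw [filter_filter]
    congr 1
    grind
  rw [← hsum, degreeOutside, ← card_neighborFinset_eq_degree, neighborFinset_eq_filter,
    ← card_filter_add_card_filter_not (s := {x | G.Adj y x}) (f · ∈ A), filter_filter,
    filter_filter, add_comm]

theorem Sees.one_le_card (h : Sees G f y c) : 1 ≤ #{x | G.Adj y x ∧ f x = c} := by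
  obtain ⟨x, hx⟩ := h
  exact card_pos.2 ⟨x, by simpa using hx⟩

theorem degreeOutside_add_card_le (hTA : T ⊆ A) (h : ∀ c ∈ T, Sees G f y c) :
    degreeOutside G f A y + #T ≤ G.degree y := by
  rw [← degreeOutside_add_sum_card G f A y, card_eq_sum_ones]
  gcongr
  exact (sum_le_sum fun c hc ↦ (h c hc).one_le_card).trans (sum_le_sum_of_subset hTA)

theorem Sees.two_le_card_add_card_solo (h : Sees G f z c) :
    2 ≤ #{x | G.Adj z x ∧ f x = c} + #{w | IsSolo G f w z ∧ f w = c} := by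
  have hone := h.one_le_card
  obtain ⟨x, hx⟩ := h
  by_cases hsolo : IsSolo G f x z
  · have : 0 < #{w | IsSolo G f w z ∧ f w = c} := card_pos.2 ⟨x, by simpa using ⟨hsolo, hx.2⟩⟩
    omega
  · obtain ⟨x', hzx', hx', hne⟩ : ∃ x', G.Adj z x' ∧ f x' = f x ∧ x' ≠ x := by
      simpa [IsSolo, hx.1] using hsolo
    have : 1 < #{x | G.Adj z x ∧ f x = c} :=
      one_lt_card.2 ⟨x, by simpa using hx, x', by simpa using ⟨hzx', hx'.trans hx.2⟩, hne.symm⟩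
    omega

theorem card_add_card_add_degreeOutside_le (hTA : T ⊆ A) (h : ∀ c ∈ A, Sees G f z c) :
    #A + #T + degreeOutside G f A z ≤ G.degree z + #{w | f w ∈ T ∧ IsSolo G f w z} := by
  have hsolo : #{w | f w ∈ T ∧ IsSolo G f w z} = ∑ c ∈ T, #{w | IsSolo G f w z ∧ f w = c} := by
    rw [card_eq_sum_card_fiberwise (f := f) (t := T) fun w hw ↦ (mem_filter.1 hw).2.1]
    refine sum_congr rfl fun c hc ↦ ?_
    rw [filter_filter]
    congr 1
    grind
  have hT : #T * 2 ≤ ∑ c ∈ T, (#{x | G.Adj z x ∧ f x = c} + #{w | IsSolo G f w z ∧ f w = c}) :=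
    card_nsmul_le_sum _ _ _ fun c hc ↦ (h c (hTA hc)).two_le_card_add_card_solo
  have hAT : #(A \ T) * 1 ≤ ∑ c ∈ A \ T, #{x | G.Adj z x ∧ f x = c} :=
    card_nsmul_le_sum _ _ _ fun c hc ↦ (h c (sdiff_subset hc)).one_le_card
  have hcard := card_sdiff_add_card_eq_card hTA
  rw [← degreeOutside_add_sum_card G f A z, hsolo, ← sum_sdiff hTA]
  rw [sum_add_distrib] at hT
  omega

theorem lt_of_degreeOutside_solo_le (hB : q * s < #{v | f v ∉ A}) (hc : #{v | f v = c} = s)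
    (hsees : ∀ y, f y ∉ A → Sees G f y c)
    (hdeg : ∀ x, f x = c → degreeOutside G f A x ≤ q + t)
    (hsolo : ∀ w z, f w = c → f z ∉ A → IsSolo G f w z → degreeOutside G f A w ≤ q) : q < t := by
  by_contra! htq
  set B : Finset V := {v | f v ∉ A}
  set W : Finset V := {v | f v = c}
  have hlower : ∀ y ∈ B, 2 ≤ #(W.bipartiteAbove G.Adj y) +
      #(W.bipartiteAbove (fun z w ↦ IsSolo G f w z) y) := by
    intro y hy
    convert (hsees y (by simpa [B] using hy)).two_le_card_add_card_solo using 3 <;>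
      · ext; simp [W, and_comm]
  have hupper : ∀ x ∈ W, #(B.bipartiteBelow G.Adj x) +
      #(B.bipartiteBelow (fun z w ↦ IsSolo G f w z) x) ≤ 2 * q := by
    intro x hx
    have hxc : f x = c := by simpa [W] using hx
    have hadj : #(B.bipartiteBelow G.Adj x) = degreeOutside G f A x := by
      rw [degreeOutside]
      congr 1
      ext; simp [B, G.adj_comm, and_comm]
    rcases (B.bipartiteBelow (fun z w ↦ IsSolo G f w z) x).eq_empty_or_nonempty with h | ⟨z, hz⟩
    · have := hdeg x hxc
      rw [h, card_empty]
      omega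
    · obtain ⟨hzB, hz⟩ := (mem_bipartiteBelow _).1 hz
      have hle : #(B.bipartiteBelow (fun z w ↦ IsSolo G f w z) x) ≤ #(B.bipartiteBelow G.Adj x) :=
        card_le_card (monotone_filter_right _ fun _ _ h ↦ h.1)
      have := hsolo x z hxc (by simpa [B] using hzB) hz
      omega
  have hcount : #B * 2 ≤ #W * (2 * q) := by
    refine (card_nsmul_le_sum _ _ _ hlower).trans ?_
    rw [sum_add_distrib, sum_card_bipartiteAbove_eq_sum_card_bipartiteBelow,
      sum_card_bipartiteAbove_eq_sum_card_bipartiteBelow, ← sum_add_distrib]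
    exact sum_le_card_nsmul _ _ _ hupper
  rw [hc] at hcount
  nlinarith

/-- What the counting argument uses about the set `A` of accessible colours and its terminal part
`T`: the vertices coloured outside `A` see all of `A`, the vertices coloured by `T` nearly all of
it. Here `q` is the number of inaccessible colours. -/
structure IsTerminalFamily (G : SimpleGraph V) (f : V → C) (A T : Finset C) (q s : ℕ) : Prop where
  nonempty : T.Nonempty
  subset : T ⊆ A
  degree_lt : ∀ v, G.degree v < #A + q
  card_outside : #{v | f v ∉ A} = q * s + 1
  card_class : ∀ c ∈ T, #{v | f v = c} = s
  sees : ∀ y, f y ∉ A → ∀ c ∈ A, Sees G f y c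
  degreeOutside_le : ∀ y, f y ∈ T → degreeOutside G f A y ≤ q + #T

namespace IsTerminalFamily

theorem degreeOutside_lt (h : IsTerminalFamily G f A T q s) (hy : f y ∉ A) :
    degreeOutside G f A y < q := by
  have := degreeOutside_add_card_le subset_rfl (h.sees y hy)
  have := h.degree_lt y
  omega

theorem card_filter_mem (h : IsTerminalFamily G f A T q s) : #{v | f v ∈ T} = #T * s := by
  rw [card_eq_sum_card_fiberwise (s := {v | f v ∈ T}) (f := f) (t := T)
    fun v hv ↦ (mem_filter.1 hv).2]
  refine sum_const_nat fun c hc ↦ ?_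
  rw [← h.card_class c hc, filter_filter]
  congr 1
  grind

theorem card_le_card_solo (h : IsTerminalFamily G f A T q s) (hz : f z ∉ A) :
    #T + (degreeOutside G f A z + 1) ≤ #{w | f w ∈ T ∧ IsSolo G f w z} + q := by
  have := card_add_card_add_degreeOutside_le h.subset (h.sees z hz)
  have := h.degree_lt z
  omega

theorem card_div_le_sum (h : IsTerminalFamily G f A T q s) (hqT : q < #T) (hz : f z ∉ A)
    (hclique : ∀ w, f w ∈ T → IsSolo G f w z → ∀ z', z' ≠ z → f z' ∉ A → IsSolo G f w z' →
      G.Adj z z') :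
    (#T / q : ℚ) ≤ ∑ w ∈ ({w | f w ∈ T} : Finset V) with IsSolo G f w z,
      (1 / #{z' ∈ ({z' | f z' ∉ A} : Finset V) | IsSolo G f w z'} : ℚ) := by
  set B : Finset V := {z' | f z' ∉ A}
  set N := ({w | f w ∈ T} : Finset V).filter (IsSolo G f · z)
  set D := degreeOutside G f A z + 1
  have hDq : D ≤ q := h.degreeOutside_lt hz
  have hNq : #T * D ≤ #N * q := by
    have hN : #T + D ≤ #N + q := by
      simpa only [N, filter_filter] using h.card_le_card_solo hz
    obtain ⟨e, rfl⟩ := exists_add_of_le hDq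
    have : #T ≤ #N + e := by omega
    nlinarith
  have hcard : ∀ w ∈ N, 1 ≤ #{z' ∈ B | IsSolo G f w z'} ∧ #{z' ∈ B | IsSolo G f w z'} ≤ D := by
    intro w hw
    obtain ⟨hwT, hwz⟩ : f w ∈ T ∧ IsSolo G f w z := by simpa [N] using hw
    rw [← card_erase_add_one (show z ∈ {z' ∈ B | IsSolo G f w z'} by simpa [B] using ⟨hz, hwz⟩)]
    refine ⟨Nat.le_add_left _ _, Nat.add_le_add_right (card_le_card fun z' hz' ↦ ?_) 1⟩
    obtain ⟨hne, hz'A, hwz'⟩ : z' ≠ z ∧ f z' ∉ A ∧ IsSolo G f w z' := by simpa [B] using hz'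
    simpa using ⟨hclique w hwT hwz z' hne hz'A hwz', hz'A⟩
  calc (#T / q : ℚ) ≤ #N / D := by
        rw [div_le_div_iff₀ (by norm_cast; omega) (by positivity)]
        exact mod_cast hNq
    _ = ∑ w ∈ N, (1 / D : ℚ) := by rw [sum_const, nsmul_eq_mul, mul_one_div]
    _ ≤ _ := sum_le_sum fun w hw ↦ one_div_le_one_div_of_le
      (by exact_mod_cast (hcard w hw).1) (by exact_mod_cast (hcard w hw).2)

/- Each vertex coloured by `T` spreads a total charge of `1` evenly over the vertices to which it is
solo; if those form cliques, every vertex coloured outside `A` receives at least `#T / q`, which is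
too much. -/
theorem exists_nonadj_solo (h : IsTerminalFamily G f A T q s) (hqT : q < #T) :
    ∃ w z z', f w ∈ T ∧ f z ∉ A ∧ f z' ∉ A ∧ IsSolo G f w z ∧ IsSolo G f w z' ∧ z' ≠ z ∧
      ¬ G.Adj z z' := by
  by_contra! hclique
  set B : Finset V := {v | f v ∉ A}
  have htotal : #B • (#T / q : ℚ) ≤ #{w | f w ∈ T} :=
    (card_nsmul_le_sum _ _ _ fun z hz ↦ by
      have hzA : f z ∉ A := by simpa [B] using hz
      exact h.card_div_le_sum hqT hzA fun w hw hwz z' hne hz' hwz' ↦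
        hclique w z z' hw hzA hz' hwz hwz' hne).trans
      (sum_sum_one_div_card_le (fun z w ↦ IsSolo G f w z) B {w | f w ∈ T})
  have hq : 0 < q := by
    obtain ⟨z, hz⟩ : B.Nonempty := card_pos.1 (by rw [h.card_outside]; omega)
    exact (Nat.zero_le _).trans_lt (h.degreeOutside_lt (by simpa [B] using hz))
  rw [h.card_outside, h.card_filter_mem, nsmul_eq_mul, mul_div_assoc',
    div_le_iff₀ (by exact_mod_cast hq)] at htotal
  norm_cast at htotal
  nlinarith

theorem exists_solo (h : IsTerminalFamily G f A T q s) :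
    ∃ w z, f w ∈ T ∧ f z ∉ A ∧ IsSolo G f w z ∧ ((∃ c ∈ A, c ≠ f w ∧ ¬ Sees G f w c) ∨
      ∃ z', z' ≠ z ∧ f z' ∉ A ∧ IsSolo G f w z' ∧ ¬ G.Adj z z') := by
  by_contra! hcon
  obtain ⟨c, hc⟩ := h.nonempty
  have hqT : q < #T := by
    refine lt_of_degreeOutside_solo_le (by rw [h.card_outside]; omega) (h.card_class c hc)
      (fun y hy ↦ h.sees y hy c (h.subset hc))
      (fun x hx ↦ h.degreeOutside_le x (hx ▸ hc)) fun w z hw hz hwz ↦ ?_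
    have hwT : f w ∈ T := hw ▸ hc
    have := degreeOutside_add_card_le (erase_subset (f w) A) fun c hc ↦
      (hcon w z hwT hz hwz).1 c (mem_of_mem_erase hc) (ne_of_mem_erase hc)
    have := card_erase_add_one (h.subset hwT)
    have := h.degree_lt w
    omega
  obtain ⟨w, z, z', hw, hz, hz', hwz, hwz', hne, hadj⟩ := h.exists_nonadj_solo hqT
  exact hadj ((hcon w z hw hz hwz).2 z' hne hz' hwz')

end IsTerminalFamily

end Counting

section Terminal

variable {V C : Type*} [Fintype V] [Fintype C] {G : SimpleGraph V} {f : V → C} {a b u : C} {s : ℕ}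

theorem NearlyEquitable.card_outside {A : Finset C} (hf : NearlyEquitable f s a b) (ha : a ∈ A)
    (hb : b ∉ A) : #{v | f v ∉ A} = #Aᶜ * s + 1 := by
  have hclass : ∀ c ∈ Aᶜ, #{v ∈ ({v | f v ∉ A} : Finset V) | f v = c} =
      s + if c = b then 1 else 0 := by
    intro c hc
    have hcA := mem_compl.1 hc
    rw [← hf c, if_neg (ne_of_mem_of_not_mem ha hcA).symm, add_zero, filter_filter]
    congr 1
    grind
  rw [card_eq_sum_card_fiberwise (s := {v | f v ∉ A}) (f := f) (t := Aᶜ) (by intro v; simp),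
    sum_congr rfl hclass, sum_add_distrib, sum_const, smul_eq_mul, sum_ite_eq',
    if_pos (mem_compl.2 hb)]

theorem NearlyEquitable.exists_mem_accessible_ne (hf : NearlyEquitable f s a b)
    (hb : b ∉ accessible (Movable G f) a) (hdeg : ∀ v, G.degree v < Fintype.card C) :
    ∃ c ∈ accessible (Movable G f) a, c ≠ a := by
  by_contra! hA
  replace hA : accessible (Movable G f) a = {a} :=
    eq_singleton_iff_unique_mem.2 ⟨self_mem_accessible, hA⟩
  have hout := hf.card_outside self_mem_accessible hb
  have hq := card_add_card_compl ({a} : Finset C)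
  have hclass := hf a
  rw [if_pos rfl, if_neg (by rintro rfl; exact hb self_mem_accessible)] at hclass
  have hcount := card_mul_le_card_mul (s := {y | f y ∉ accessible (Movable G f) a})
    (t := {x | f x = a}) (m := 1) (n := #({a} : Finset C)ᶜ) G.Adj
    (fun y hy ↦ by
      obtain ⟨x, hyx, hx⟩ := sees_of_notMem_accessible (mem_filter.1 hy).2 self_mem_accessible
      exact card_pos.2 ⟨x, by simpa using ⟨hx, hyx⟩⟩)
    (fun x _ ↦ by
      have hle : #(({y | f y ∉ accessible (Movable G f) a} : Finset V).bipartiteBelow G.Adj x) ≤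
          G.degree x := card_le_card fun y hy ↦ by simpa using ((mem_bipartiteBelow _).1 hy).2.symm
      have := hdeg x
      rw [card_singleton] at hq
      omega)
  rw [hout, hA] at hcount
  nlinarith

theorem NearlyEquitable.isTerminalFamily_trapped (hf : NearlyEquitable f s a b)
    (hb : b ∉ accessible (Movable G f) a) (hdeg : ∀ v, G.degree v < Fintype.card C)
    (hu : (trapped (Movable G f) a u).Nonempty) :
    IsTerminalFamily G f (accessible (Movable G f) a) (trapped (Movable G f) a u)
      #(accessible (Movable G f) a)ᶜ s where
  nonempty := hu
  subset := filter_subset _ _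
  degree_lt v := by rw [card_add_card_compl]; exact hdeg v
  card_outside := hf.card_outside self_mem_accessible hb
  card_class c hc := hf.card_class_eq (ne_of_mem_of_not_mem hc target_notMem_trapped)
    (ne_of_mem_of_not_mem (mem_trapped.1 hc).1 hb)
  sees y hy c hc := sees_of_notMem_accessible hy hc
  degreeOutside_le y hy := by
    set A := accessible (Movable G f) a
    set T := trapped (Movable G f) a u
    have hsees : ∀ c ∈ (A \ T).erase u, Sees G f y c := by
      intro c hc
      obtain ⟨hcu, hcA, hcT⟩ : c ≠ u ∧ c ∈ A ∧ c ∉ T := by simpa using hc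
      by_contra h
      exact not_step_of_mem_trapped hy hcA hcT hcu ⟨y, rfl, h⟩
    have := degreeOutside_add_card_le ((erase_subset _ _).trans sdiff_subset) hsees
    have := pred_card_le_card_erase (s := A \ T) (a := u)
    have := card_sdiff_add_card_eq_card (show T ⊆ A from filter_subset _ _)
    have := card_add_card_compl A
    have := hdeg y
    omega

end Terminal

section Exchange

variable {V C : Type*} {G : SimpleGraph V} {f g : V → C} {A : Finset C} {a b c X : C} {s : ℕ}
  {v w z : V}

/-- The colouring `f`, with the vertices whose colour is not in `A` recoloured by `g`. -/
noncomputable def merge (f g : V → C) (A : Finset C) (v : V) : C :=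
  if f v ∈ A then f v else g v

/-- The colouring in which `w` moves to the colour `X`, `z` takes the former colour of `w`, and the
other vertices coloured by `f` outside `A` are recoloured by `g`. -/
noncomputable def exchange (f g : V → C) (A : Finset C) (w z : V) (X : C) : V → C :=
  update (update (merge f g A) z (f w)) w X

theorem exchange_self (f g : V → C) (A : Finset C) (w z : V) (X : C) : exchange f g A w z X w = X :=
  update_self ..

/-- `g` restricts to a proper colouring of the subgraph of `G` induced on `S`, with colours in `Q`,
whose classes all have `s` elements. -/
structure EquitableOn (G : SimpleGraph V) (S : Finset V) (Q : Finset C) (s : ℕ) (g : V → C) :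
    Prop where
  mem : ∀ v ∈ S, g v ∈ Q
  valid : ∀ u ∈ S, ∀ v ∈ S, G.Adj u v → g u ≠ g v
  card_class : ∀ c ∈ Q, #{v ∈ S | g v = c} = s

/-- The conditions under which `exchange f g A w z X` is again a nearly equitable colouring. -/
structure IsExchange [Fintype V] [Fintype C] (G : SimpleGraph V) (f g : V → C) (A : Finset C)
    (w z : V) (X : C) (s : ℕ) : Prop where
  mem : f w ∈ A
  notMem : f z ∉ A
  solo : IsSolo G f w z
  equitableOn : EquitableOn G (({v | f v ∉ A} : Finset V).erase z) Aᶜ s g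
  ne : X ≠ f w
  merge_ne : ∀ x, x ≠ z → G.Adj w x → merge f g A x ≠ X

namespace IsExchange

variable [Fintype V] [Fintype C]

theorem exchange_of_mem (h : IsExchange G f g A w z X s) (hv : v ≠ w) (hvA : f v ∈ A) :
    exchange f g A w z X v = f v := by
  rw [exchange, update_of_ne hv, update_of_ne (by rintro rfl; exact h.notMem hvA), merge,
    if_pos hvA]

theorem exchange_of_notMem (h : IsExchange G f g A w z X s) (hv : v ≠ z) (hvA : f v ∉ A) :
    exchange f g A w z X v = g v := by
  rw [exchange, update_of_ne (by rintro rfl; exact hvA h.mem), update_of_ne hv, merge, if_neg hvA]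

theorem exchange_solo (h : IsExchange G f g A w z X s) : exchange f g A w z X z = f w := by
  rw [exchange, update_of_ne (by rintro rfl; exact h.notMem h.mem), update_self]

theorem notMem_of_notMem (h : IsExchange G f g A w z X s) (hv : v ≠ z) (hvA : f v ∉ A) : g v ∉ A :=
  mem_compl.1 (h.equitableOn.mem v (by simpa using ⟨hv, hvA⟩))

theorem eq_of_exchange_eq (h : IsExchange G f g A w z X s) (hvw : v ≠ w) (hvz : v ≠ z) (hc : c ∈ A)
    (hv : exchange f g A w z X v = c) : f v = c := by
  by_cases hvA : f v ∈ A
  · rwa [h.exchange_of_mem hvw hvA] at hv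
  · rw [h.exchange_of_notMem hvz hvA] at hv
    exact absurd (hv ▸ hc) (h.notMem_of_notMem hvz hvA)

theorem exchange_ne (h : IsExchange G f g A w z X s) (hf : ∀ u v, G.Adj u v → f u ≠ f v) {u : V}
    (huv : G.Adj u v) : exchange f g A w z X u ≠ exchange f g A w z X v := by
  have hmerge : ∀ x y, x ≠ z → y ≠ z → G.Adj x y → merge f g A x ≠ merge f g A y := by
    intro x y hx hy hxy
    have := hf x y hxy
    have hg : ∀ v, v ≠ z → f v ∉ A → g v ∉ A := fun v ↦ h.notMem_of_notMem
    have hvalid := h.equitableOn.valid x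
    grind [merge]
  have hz : ∀ x, x ≠ w → x ≠ z → G.Adj z x → merge f g A x ≠ f w := fun x hxw hxz hzx hx ↦ by
    rw [merge] at hx
    split_ifs at hx with hxA
    · exact hxw (h.solo.2 x hzx hx)
    · exact h.notMem_of_notMem hxz hxA (hx ▸ h.mem)
  have := h.merge_ne
  have := h.ne
  have := huv.symm
  have := huv.ne
  simp only [exchange, update_apply]
  grind

/-- The exchange as a proper colouring of `G`. -/
noncomputable def coloring {f : G.Coloring C} (h : IsExchange G f g A w z X s) : G.Coloring C :=
  Coloring.mk (exchange f g A w z X) fun huv ↦ h.exchange_ne (fun _ _ ↦ f.valid) huv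

theorem nearlyEquitable (h : IsExchange G f g A w z X s) (hf : NearlyEquitable f s a b)
    (ha : a ∈ A) (hb : b ∉ A) : NearlyEquitable (exchange f g A w z X) s a X := by
  have hwz : w ≠ z := by rintro rfl; exact h.notMem h.mem
  have hw : update (merge f g A) z (f w) w = f w := by rw [update_of_ne hwz, merge, if_pos h.mem]
  refine NearlyEquitable.update (hw.symm ▸ fun c ↦ ?_)
  rw [card_filter_update_eq, add_right_comm]
  congr 1
  by_cases hc : c ∈ A
  · have hfc := hf c
    rw [if_neg (ne_of_mem_of_not_mem hc hb), add_zero] at hfc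
    rw [← hfc]
    congr 2
    have := h.notMem
    have hg : ∀ v, v ≠ z → f v ∉ A → g v ∉ A := fun v ↦ h.notMem_of_notMem
    ext v
    grind [merge]
  · rw [if_neg (ne_of_mem_of_not_mem ha hc).symm, add_zero,
      ← h.equitableOn.card_class c (mem_compl.2 hc)]
    congr 1
    ext v
    grind [merge]

theorem not_sees (h : IsExchange G f g A w z X s) (hcA : c ∈ A) (hcw : c ≠ f w) (hcX : c ≠ X)
    (hv : ¬ Sees G f v c) : ¬ Sees G (exchange f g A w z X) v c := by
  rintro ⟨x, hvx, hx⟩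
  refine hv ⟨x, hvx, h.eq_of_exchange_eq ?_ ?_ hcA hx⟩
  · rintro rfl
    exact hcX (hx.symm.trans (exchange_self ..))
  · rintro rfl
    exact hcw (hx.symm.trans h.exchange_solo)

theorem movable {c' : C} (h : IsExchange G f g A w z X s) (hc : c ∈ A) (hcw : c ≠ f w)
    (hc' : c' ∈ A) (hcw' : c' ≠ f w) (hcX' : c' ≠ X) (hcc' : Movable G f c c') :
    Movable G (exchange f g A w z X) c c' := by
  obtain ⟨v, rfl, hv⟩ := hcc'
  exact ⟨v, h.exchange_of_mem (by rintro rfl; exact hcw rfl) hc, h.not_sees hc' hcw' hcX' hv⟩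

theorem mem_accessible_exchange (h : IsExchange G f g (accessible (Movable G f) a) w z X s)
    (hc : ReachesAvoiding (Movable G f) {f w} c a) (hcw : c ≠ f w)
    (hcX : X ∈ accessible (Movable G f) a → X = c) :
    c ∈ accessible (Movable G (exchange f g (accessible (Movable G f) a) w z X)) a := by
  refine mem_accessible.2 (hc.transfer hcw fun x y hx hy hyc hya hxy ↦ ?_)
  have hyA := mem_accessible.2 hya
  refine h.movable (mem_accessible.2 (.head hxy hya)) hx hyA hy ?_ hxy
  rintro rfl
  exact hyc (hcX hyA)

end IsExchange
end Exchange

section Augment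

variable {V C : Type*} [Fintype V] [Fintype C] {G : SimpleGraph V} {f : G.Coloring C} {g : V → C}
  {a b : C} {s : ℕ} {w z z' : V}

theorem NearlyEquitable.hasEquitableColoring_of_mem_accessible (hf : NearlyEquitable f s a b)
    (hb : b ∈ accessible (Movable G f) a) : HasEquitableColoring G C s :=
  hf.hasEquitableColoring_of_reachesAvoiding ∅ (Set.notMem_empty b) <|
    ReflTransGen.mono (fun _ _ h ↦ ⟨h, Set.notMem_empty _⟩) _ _ (mem_accessible.1 hb)

theorem NearlyEquitable.hasEquitableColoring_of_not_sees {X : C} (hf : NearlyEquitable f s a b)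
    (hb : b ∉ accessible (Movable G f) a) (hw : trapped (Movable G f) a (f w) = ∅)
    (hwA : f w ∈ accessible (Movable G f) a) (hz : f z ∉ accessible (Movable G f) a)
    (hwz : IsSolo G f w z)
    (hg : EquitableOn G (({v | f v ∉ accessible (Movable G f) a} : Finset V).erase z)
      (accessible (Movable G f) a)ᶜ s g)
    (hXA : X ∈ accessible (Movable G f) a) (hXw : X ≠ f w) (hX : ¬ Sees G f w X) :
    HasEquitableColoring G C s := by
  have h : IsExchange G f g (accessible (Movable G f) a) w z X s := by
    refine ⟨hwA, hz, hwz, hg, hXw, fun x hxz hwx hx ↦ ?_⟩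
    rw [merge] at hx
    split_ifs at hx with hxA
    · exact hX ⟨x, hwx, hx⟩
    · exact mem_compl.1 (hg.mem x (by simpa using ⟨hxz, hxA⟩)) (hx ▸ hXA)
  exact NearlyEquitable.hasEquitableColoring_of_mem_accessible (f := h.coloring)
    (h.nearlyEquitable hf self_mem_accessible hb)
    (h.mem_accessible_exchange (reachesAvoiding_of_trapped_eq_empty hw hXA hXw) hXw fun _ ↦ rfl)

theorem exists_color_merge_ne {A : Finset C} (hdeg : degreeOutside G f A w ≤ #Aᶜ)
    (hz : f z ∉ A) (hwz : G.Adj w z) :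
    ∃ Y ∉ A, ∀ x, x ≠ z → G.Adj w x → merge f g A x ≠ Y := by
  set N : Finset V := {x | G.Adj w x ∧ f x ∉ A}
  have hN : #((N.erase z).image g) < #Aᶜ := calc
    #((N.erase z).image g) ≤ #(N.erase z) := card_image_le
    _ < #N := card_erase_lt_of_mem (by simpa [N] using ⟨hwz, hz⟩)
    _ ≤ #Aᶜ := hdeg
  obtain ⟨Y, hY, hYN⟩ := exists_mem_notMem_of_card_lt_card hN
  rw [mem_compl] at hY
  refine ⟨Y, hY, fun x hxz hwx hx ↦ ?_⟩
  rw [merge] at hx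
  split_ifs at hx with hxA
  · exact hY (hx ▸ hxA)
  · exact hYN (mem_image.2 ⟨x, by simpa [N] using ⟨hxz, hwx, hxA⟩, hx⟩)

theorem NearlyEquitable.exists_accessible_ssubset (hf : NearlyEquitable f s a b)
    (hb : b ∉ accessible (Movable G f) a) (hdeg : ∀ v, G.degree v < Fintype.card C)
    (hw : trapped (Movable G f) a (f w) = ∅) (hwA : f w ∈ accessible (Movable G f) a)
    (hwa : f w ≠ a) (hwsees : ∀ c ∈ accessible (Movable G f) a, c ≠ f w → Sees G f w c)
    (hz : f z ∉ accessible (Movable G f) a) (hwz : IsSolo G f w z)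
    (hz' : f z' ∉ accessible (Movable G f) a) (hwz' : IsSolo G f w z') (hne : z' ≠ z)
    (hadj : ¬ G.Adj z z')
    (hg : EquitableOn G (({v | f v ∉ accessible (Movable G f) a} : Finset V).erase z)
      (accessible (Movable G f) a)ᶜ s g) :
    ∃ f' : G.Coloring C, ∃ b', NearlyEquitable f' s a b' ∧
      accessible (Movable G f) a ⊂ accessible (Movable G f') a := by
  set A := accessible (Movable G f) a
  have hdegw : degreeOutside G f A w ≤ #Aᶜ := by
    have := degreeOutside_add_card_le (erase_subset (f w) A) fun c hc ↦
      hwsees c (mem_of_mem_erase hc) (ne_of_mem_erase hc)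
    have := card_erase_add_one hwA
    have := card_add_card_compl A
    have := hdeg w
    omega
  obtain ⟨Y, hYA, hY⟩ := exists_color_merge_ne (g := g) hdegw hz hwz.1.symm
  have hYw : Y ≠ f w := (ne_of_mem_of_not_mem hwA hYA).symm
  have h : IsExchange G f g A w z Y s := ⟨hwA, hz, hwz, hg, hYw, hY⟩
  refine ⟨h.coloring, Y, h.nearlyEquitable hf self_mem_accessible hb, ?_⟩
  have hother : ∀ c ∈ A, c ≠ f w → c ∈ accessible (Movable G h.coloring) a := fun c hc hcw ↦
    h.mem_accessible_exchange (reachesAvoiding_of_trapped_eq_empty hw hc hcw) hcw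
      fun hYA' ↦ absurd hYA' hYA
  have hw : f w ∈ accessible (Movable G h.coloring) a := by
    obtain ⟨c, hcw, ⟨v, hvw, hvc⟩, hca⟩ := exists_step_reachesAvoiding (mem_accessible.1 hwA) hwa
    have hcA : c ∈ A := mem_accessible.2 hca.reflTransGen
    have hv : v ≠ w := by rintro rfl; exact hvc (hwsees c hcA hcw)
    have hcY : c ≠ Y := ne_of_mem_of_not_mem hcA hYA
    exact mem_accessible.2 (.head ⟨v, (h.exchange_of_mem hv (hvw ▸ hwA)).trans hvw,
      h.not_sees hcA hcw hcY hvc⟩ (mem_accessible.1 (hother c hcA hcw)))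
  have hgz' : g z' ∈ accessible (Movable G h.coloring) a := by
    refine mem_accessible.2 (.head ⟨z', h.exchange_of_notMem hne hz', ?_⟩ (mem_accessible.1 hw))
    rintro ⟨x, hz'x, hx⟩
    have hxw : x ≠ w := by rintro rfl; exact hYw ((exchange_self ..).symm.trans hx)
    have hxz : x ≠ z := by rintro rfl; exact hadj hz'x.symm
    exact hxw (hwz'.2 x hz'x (h.eq_of_exchange_eq hxw hxz hwA hx))
  refine (Finset.ssubset_iff_of_subset fun c hc ↦ ?_).2 ⟨g z', hgz', h.notMem_of_notMem hne hz'⟩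
  exact if hcw : c = f w then hcw ▸ hw else hother c hc hcw

theorem NearlyEquitable.hasEquitableColoring_or_exists (hf : NearlyEquitable f s a b)
    (hb : b ∉ accessible (Movable G f) a) (hdeg : ∀ v, G.degree v < Fintype.card C)
    (hout : ∀ z, f z ∉ accessible (Movable G f) a → ∃ g,
      EquitableOn G (({v | f v ∉ accessible (Movable G f) a} : Finset V).erase z)
        (accessible (Movable G f) a)ᶜ s g) :
    HasEquitableColoring G C s ∨ ∃ f' : G.Coloring C, ∃ b', NearlyEquitable f' s a b' ∧
      accessible (Movable G f) a ⊂ accessible (Movable G f') a := by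
  obtain ⟨u, -, hu, hmin⟩ := exists_minimal_trapped (hf.exists_mem_accessible_ne hb hdeg)
  obtain ⟨w, z, hwT, hz, hwz, h⟩ := (hf.isTerminalFamily_trapped hb hdeg hu).exists_solo
  have hwA := (mem_trapped.1 hwT).1
  have hwa : f w ≠ a := ne_of_mem_of_not_mem hwT target_notMem_trapped
  obtain ⟨g, hg⟩ := hout z hz
  by_cases hX : ∃ X ∈ accessible (Movable G f) a, X ≠ f w ∧ ¬ Sees G f w X
  · obtain ⟨X, hXA, hXw, hX⟩ := hX
    exact .inl (hf.hasEquitableColoring_of_not_sees hb (hmin _ hwT) hwA hz hwz hg hXA hXw hX)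
  · obtain ⟨z', hne, hz', hwz', hadj⟩ := h.resolve_left hX
    push Not at hX
    exact .inr (hf.exists_accessible_ssubset hb hdeg (hmin _ hwT) hwA hwa hX hz hwz hz' hwz' hne
      hadj hg)

end Augment

section Restriction

variable {V C : Type*} {G : SimpleGraph V} {S : Finset V}

theorem HasEquitableColoring.exists_equitableOn [Nonempty C] {Q : Finset C} {s : ℕ}
    (h : HasEquitableColoring (G.comap (Subtype.val : S → V)) Q s) :
    ∃ g, EquitableOn G S Q s g := by
  obtain ⟨f, hf⟩ := h
  obtain ⟨g, hg⟩ : ∃ g : V → C, ∀ v : S, g v = f v :=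
    ⟨_, Subtype.val_injective.extend_apply (fun v ↦ (f v : C)) fun _ ↦ Classical.arbitrary C⟩
  refine ⟨g, fun v hv ↦ ?_, fun u hu v hv huv ↦ ?_, fun c hc ↦ ?_⟩
  · exact hg ⟨v, hv⟩ ▸ (f ⟨v, hv⟩).2
  · rw [hg ⟨u, hu⟩, hg ⟨v, hv⟩]
    exact fun h ↦ f.valid (show (G.comap Subtype.val).Adj ⟨u, hu⟩ ⟨v, hv⟩ from huv) (Subtype.ext h)
  · rw [← hf ⟨c, hc⟩, ← card_map (Embedding.subtype _)]
    congr 1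
    ext v
    simp only [mem_filter, mem_map, mem_univ, true_and, Subtype.ext_iff, ← hg]
    simp [and_comm]

theorem ncard_neighborSet (v : V) [Fintype (G.neighborSet v)] :
    (G.neighborSet v).ncard = G.degree v :=
  Set.ncard_eq_toFinset_card' _

theorem degree_comap_val (v : S)
    [Fintype ((G.comap (Subtype.val : S → V)).neighborSet v)] :
    (G.comap (Subtype.val : S → V)).degree v = #{x ∈ S | G.Adj v x} := by
  rw [← card_neighborFinset_eq_degree, ← card_map (Embedding.subtype _)]
  congr 1
  ext x
  simp [and_comm]

end Restriction

section Induction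

variable {V C : Type*} [Fintype V] [Fintype C] {G : SimpleGraph V} {f : G.Coloring C} {a b : C}
  {s : ℕ}

theorem NearlyEquitable.hasEquitableColoring_of_equitableOn (hf : NearlyEquitable f s a b)
    (hdeg : ∀ v, G.degree v < Fintype.card C)
    (hext : ∀ (S : Finset V) (Q : Finset C), #S < Fintype.card V → #S = #Q * s →
      (∀ v ∈ S, #{x ∈ S | G.Adj v x} < #Q) → ∃ g, EquitableOn G S Q s g) :
    HasEquitableColoring G C s := by
  induction hA : accessible (Movable G f) a using WellFoundedGT.induction generalizing f b with
  | _ A ih =>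
    subst hA
    by_cases hb : b ∈ accessible (Movable G f) a
    · exact hf.hasEquitableColoring_of_mem_accessible hb
    refine (hf.hasEquitableColoring_or_exists hb hdeg fun z hz ↦ hext _ _ ?_ ?_ fun v hv ↦ ?_).elim
      id fun ⟨f', b', hf', hlt⟩ ↦ ih _ hlt hf' rfl
    · exact card_lt_card ((ssubset_univ_iff).2 fun h ↦ by simpa using h.ge (mem_univ z))
    · rw [card_erase_of_mem (by simpa using hz), hf.card_outside self_mem_accessible hb,
        Nat.add_sub_cancel]
    · have hvA : f v ∉ accessible (Movable G f) a := by simpa using mem_of_mem_erase hv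
      have hle : #{x ∈ ({v | f v ∉ accessible (Movable G f) a} : Finset V).erase z | G.Adj v x} ≤
          degreeOutside G f (accessible (Movable G f) a) v := card_le_card fun x hx ↦ by
        rw [mem_filter, mem_erase, mem_filter] at hx
        simpa using ⟨hx.2, hx.1.2.2⟩
      have := degreeOutside_add_card_le subset_rfl fun c hc ↦ sees_of_notMem_accessible hvA hc
      have := hdeg v
      have := card_add_card_compl (accessible (Movable G f) a)
      omega

theorem hasEquitableColoring_bot (h : Fintype.card V = Fintype.card C * s) :
    HasEquitableColoring (⊥ : SimpleGraph V) C s := by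
  let e : V ≃ C × Fin s := Fintype.equivOfCardEq (by simpa using h)
  refine ⟨Coloring.mk (fun v ↦ (e v).1) (by simp), fun c ↦ ?_⟩
  calc #{v | (e v).1 = c} = #(({c} : Finset C) ×ˢ (univ : Finset (Fin s))) :=
        card_equiv e fun v ↦ by
          simp only [mem_filter, mem_univ, true_and, mem_product, mem_singleton, and_true]
    _ = s := by simp

theorem exists_not_sees (f : V → C) {v : V} (hdeg : G.degree v < Fintype.card C) :
    ∃ c, ¬ Sees G f v c := by
  obtain ⟨c, -, hc⟩ := exists_mem_notMem_of_card_lt_card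
    ((card_image_le (s := G.neighborFinset v) (f := f)).trans_lt hdeg)
  exact ⟨c, fun ⟨x, hx, hxc⟩ ↦ hc (mem_image.2 ⟨x, by simpa using hx, hxc⟩)⟩

theorem HasEquitableColoring.exists_nearlyEquitable {u : V} (hdeg : G.degree u < Fintype.card C)
    (h : HasEquitableColoring (G.deleteIncidenceSet u) C s) :
    ∃ f : G.Coloring C, ∃ a b, NearlyEquitable f s a b := by
  obtain ⟨f, hf⟩ := h
  obtain ⟨b, hb⟩ := exists_not_sees f hdeg
  have hproper : ∀ x y, G.Adj x y → x ≠ u → y ≠ u → f x ≠ f y := fun x y hxy hx hy ↦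
    f.valid ((G.deleteIncidenceSet_adj).2 ⟨hxy, hx, hy⟩)
  exact ⟨recolor f u b hproper hb, f u, b, NearlyEquitable.update fun c ↦ by rw [hf c]⟩

end Induction

universe u v

theorem hasEquitableColoring {V : Type u} {C : Type v} [Fintype V] [Fintype C] {G : SimpleGraph V}
    {s : ℕ} (hcard : Fintype.card V = Fintype.card C * s)
    (hdeg : ∀ v, (G.neighborSet v).ncard < Fintype.card C) : HasEquitableColoring G C s := by
  induction hn : Fintype.card V using Nat.strong_induction_on generalizing V C with
  | _ n ih =>
  induction G using WellFoundedLT.induction with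
  | _ G ihG =>
    by_cases hG : G = ⊥
    · exact hG ▸ hasEquitableColoring_bot hcard
    obtain ⟨u, v, huv⟩ := ne_bot_iff_exists_adj.1 hG
    have hlt : G.deleteIncidenceSet u < G :=
      (G.deleteIncidenceSet_le u).lt_of_ne fun h ↦
        (G.deleteIncidenceSet_adj.1 (h.symm ▸ huv : (G.deleteIncidenceSet u).Adj u v)).2.1 rfl
    have hcol := ihG _ hlt fun v ↦
      (Set.ncard_le_ncard (neighborSet_mono hlt.le v)).trans_lt (hdeg v)
    simp only [ncard_neighborSet] at hdeg
    obtain ⟨f, a, b, hf⟩ := hcol.exists_nearlyEquitable (hdeg u)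
    have : Nonempty C := ⟨a⟩
    refine hf.hasEquitableColoring_of_equitableOn hdeg fun S Q hS hSQ hdegS ↦
      (ih #S (hn ▸ hS) (by simpa using hSQ) (fun v ↦ ?_) (by simp)).exists_equitableOn
    rw [ncard_neighborSet, degree_comap_val, Fintype.card_coe]
    exact hdegS v v.2

section Padding

variable {V C : Type*} [Fintype V] {G : SimpleGraph V} {p s : ℕ}

theorem HasEquitableColoring.exists_equitable_of_sum_top
    (h : HasEquitableColoring (G ⊕g (⊤ : SimpleGraph (Fin p))) C s) :
    ∃ f : G.Coloring C, ∀ c c', #{v | f v = c} ≤ #{v | f v = c'} + 1 := by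
  obtain ⟨f, hf⟩ := h
  have hsum : ∀ c, #{v | f.sumLeft v = c} + #{i | f.sumRight i = c} = s := by
    intro c
    rw [← hf c, ← card_toLeft_add_card_toRight]
    congr 2 <;> ext <;> simp [Coloring.sumLeft, Coloring.sumRight]
  have hone : ∀ c, #{i | f.sumRight i = c} ≤ 1 := fun c ↦ card_le_one.2 fun i hi j hj ↦ by
    by_contra hij
    exact f.sumRight.valid hij ((mem_filter.1 hi).2.trans (mem_filter.1 hj).2.symm)
  refine ⟨f.sumLeft, fun c c' ↦ ?_⟩
  have := hsum c
  have := hsum c'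
  have := hone c'
  omega

end Padding

theorem exists_equitable_coloring {V C : Type*} [Finite V] [Finite C] {G : SimpleGraph V}
    (hdeg : ∀ v, (G.neighborSet v).ncard < Nat.card C) :
    ∃ f : G.Coloring C, ∀ c c', (f.colorClass c).ncard ≤ (f.colorClass c').ncard + 1 := by
  cases nonempty_fintype V
  cases nonempty_fintype C
  obtain hV | ⟨⟨v⟩⟩ := isEmpty_or_nonempty V
  · exact ⟨Coloring.mk isEmptyElim fun {v} ↦ isEmptyElim v, by simp [Set.eq_empty_of_isEmpty]⟩
  rw [Nat.card_eq_fintype_card] at hdeg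
  set n := Fintype.card V
  set k := Fintype.card C
  have hmod : n % k < k := Nat.mod_lt _ ((Nat.zero_le _).trans_lt (hdeg v))
  have hcard : Fintype.card (V ⊕ Fin (k - n % k)) = k * (n / k + 1) := by
    rw [Fintype.card_sum, Fintype.card_fin, mul_add_one]
    have := Nat.div_add_mod n k
    omega
  have hdeg' : ∀ x, ((G ⊕g (⊤ : SimpleGraph (Fin (k - n % k)))).neighborSet x).ncard < k := by
    intro x
    rcases x with v | i
    · rw [neighborSet_sum_inl, Set.ncard_image_of_injective _ Sum.inl_injective]
      exact hdeg v
    · rw [neighborSet_sum_inr, Set.ncard_image_of_injective _ Sum.inr_injective,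
        ncard_neighborSet]
      exact (degree_lt_card_verts _).trans_le (by simp)
  obtain ⟨f, hf⟩ := (hasEquitableColoring hcard hdeg').exists_equitable_of_sum_top
  refine ⟨f, fun c c' ↦ ?_⟩
  simpa [Set.ncard_eq_toFinset_card', Coloring.colorClass, Coloring.mem_colorClass] using hf c c'

section CloseGraph

variable {V ι : Type*} {k ℓ : ℕ}

/-- The auxiliary graph of the theorem: `u` and `v` are adjacent when some `g i` maps them to points
at distance less than `ℓ`. -/
def closeGraph (g : ι → V → ℤ) (ℓ : ℕ) : SimpleGraph V where
  Adj u v := v ≠ u ∧ ∃ i, |g i u - g i v| < ℓ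
  symm := ⟨fun _ _ h ↦ ⟨h.1.symm, h.2.imp fun i hi ↦ abs_sub_comm (g i _) _ ▸ hi⟩⟩
  loopless := ⟨fun _ h ↦ h.1 rfl⟩

theorem ncard_setOf_abs_sub_lt_add_le [Finite V] {f : V → ℤ}
    (hfib : ∀ w, {v | f v = w}.ncard ≤ k) (hl : 1 ≤ ℓ) (x : ℤ) :
    {v | |x - f v| < ℓ}.ncard + k ≤ 2 * k * ℓ := by
  cases nonempty_fintype V
  have hle : #{v | |x - f v| < ℓ} ≤ k * #(Ioo (x - ℓ) (x + ℓ)) := by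
    refine card_le_mul_card_image_of_maps_to (f := f) (fun v hv ↦ ?_) k fun w _ ↦ ?_
    · have := abs_lt.1 (mem_filter.1 hv).2
      rw [mem_Ioo]
      omega
    · refine le_trans (card_le_card fun v hv ↦ ?_)
        ((Set.ncard_eq_toFinset_card' {v | f v = w}).symm.trans_le (hfib w))
      simpa using (mem_filter.1 hv).2
  have hIoo : #(Ioo (x - ℓ) (x + ℓ)) + 1 = 2 * ℓ := by
    rw [Int.card_Ioo]
    omega
  rw [Set.ncard_eq_toFinset_card', Set.toFinset_ofPred]
  nlinarith

theorem ncard_neighborSet_closeGraph_lt [Finite V] [Fintype ι] [Nonempty ι] {g : ι → V → ℤ}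
    (hfib : ∀ i w, {v | g i v = w}.ncard ≤ k) (hl : 1 ≤ ℓ) (u : V) :
    ((closeGraph g ℓ).neighborSet u).ncard < 2 * k * Fintype.card ι * ℓ := by
  have i := Classical.arbitrary ι
  have hpos : 0 < {v | g i v = g i u}.ncard := (Set.ncard_pos).2 ⟨u, rfl⟩
  have hk : 0 < k := hpos.trans_le (hfib i (g i u))
  have hsub : (closeGraph g ℓ).neighborSet u ⊆ ⋃ i, {v | |g i u - g i v| < ℓ} :=
    fun v hv ↦ Set.mem_iUnion.2 hv.2
  calc ((closeGraph g ℓ).neighborSet u).ncard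
      ≤ ∑ i, {v | |g i u - g i v| < ℓ}.ncard :=
        (Set.ncard_le_ncard hsub).trans (Set.ncard_iUnion_le_of_fintype _)
    _ < ∑ _i : ι, 2 * k * ℓ := sum_lt_sum_of_nonempty univ_nonempty fun i _ ↦
        (Nat.lt_add_of_pos_right hk).trans_le (ncard_setOf_abs_sub_lt_add_le (hfib i) hl (g i u))
    _ = 2 * k * Fintype.card ι * ℓ := by
        rw [sum_const, card_univ, smul_eq_mul]
        ring

theorem ncard_setOf_comp_eq_le {α β : Type*} {f : V → α} {φ : α → β} (hφ : Injective φ)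
    (hfib : ∀ w, {v | f v = w}.ncard ≤ k) (w : β) : {v | φ (f v) = w}.ncard ≤ k := by
  by_cases h : ∃ v, φ (f v) = w
  · obtain ⟨v, rfl⟩ := h
    simpa only [hφ.eq_iff] using hfib (f v)
  · push Not at h
    simp [h]

end CloseGraph

end HajnalSzemeredi

open HajnalSzemeredi in
theorem stmt14_general {V ι : Type*} [Finite V] [Fintype ι] [Nonempty ι] {k ℓ : ℕ} (hl : 1 ≤ ℓ)
    (g : ι → V → ℤ) (hfib : ∀ i w, {v | g i v = w}.ncard ≤ k) :
    (∀ u, {u' | u' ≠ u ∧ ∃ i, |g i u - g i u'| < (ℓ : ℤ)}.ncard < 2 * k * Fintype.card ι * ℓ) ∧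
    ∃ part : V → Fin (2 * k * Fintype.card ι * ℓ),
      (∀ c u u', part u = c → part u' = c → u ≠ u' → ∀ i, (ℓ : ℤ) ≤ |g i u - g i u'|) ∧
      ∀ c c', ({v | part v = c}.ncard : ℤ) - {v | part v = c'}.ncard ≤ 1 := by
  have hdeg := ncard_neighborSet_closeGraph_lt hfib hl
  obtain ⟨f, hf⟩ := exists_equitable_coloring (C := Fin (2 * k * Fintype.card ι * ℓ))
    (by simpa only [Nat.card_fin] using hdeg)
  refine ⟨hdeg, f, fun c u u' hu hu' hne i ↦ ?_, fun c c' ↦ ?_⟩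
  · by_contra! hlt
    exact f.valid (show (closeGraph g ℓ).Adj u u' from ⟨hne.symm, i, hlt⟩) (hu.trans hu'.symm)
  · exact sub_le_iff_le_add'.2 (mod_cast hf c c')

theorem stmt14 {V : Type*} [Fintype V] [DecidableEq V] (n d ℓ : ℕ)
    (hd : 1 ≤ d) (hl : 1 ≤ ℓ) (hn : Fintype.card V = n)
    (G : SimpleGraph V) [DecidableRel G.Adj] (hdeg : ∀ v, G.degree v ≤ d)
    (g : Fin d → V → Fin n)
    (hfib : ∀ (i : Fin d) (w : Fin n), Set.ncard {v : V | g i v = w} ≤ 4) :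
    (∀ u : V, Set.ncard {u' : V | u' ≠ u ∧
        ∃ i, |((g i u : ℕ) : ℤ) - ((g i u' : ℕ) : ℤ)| < (ℓ : ℤ)} < 8 * d * ℓ) ∧
    ∃ part : V → Fin (8 * d * ℓ),
      (∀ (c : Fin (8 * d * ℓ)) (u u' : V), part u = c → part u' = c → u ≠ u' →
        ∀ i, (ℓ : ℤ) ≤ |((g i u : ℕ) : ℤ) - ((g i u' : ℕ) : ℤ)|) ∧
      (∀ c c' : Fin (8 * d * ℓ),
        (Set.ncard {v : V | part v = c} : ℤ) - (Set.ncard {v : V | part v = c'} : ℤ) ≤ 1) := by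
  have : Nonempty (Fin d) := ⟨⟨0, hd⟩⟩
  have hinj : Function.Injective fun w : Fin n ↦ ((w : ℕ) : ℤ) :=
    Nat.cast_injective.comp Fin.val_injective
  have h := stmt14_general hl (fun i v ↦ ((g i v : ℕ) : ℤ)) fun i ↦
    HajnalSzemeredi.ncard_setOf_comp_eq_le (f := g i) hinj (hfib i)
  rwa [Fintype.card_fin] at h
end
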